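/- arXiv:1105.5913 — 3 statements merged into one kernel-verified Lean document; each statement's English description precedes it below -/
import Mathlib

section
/- Assume n ≡ 0 (mod 3). Let 0 < p = p(n) < 1 be a real and m = m(n) an integer satisfying m = p·2N and liminf_{n→∞} p(n) > 0. Let X_n denote the number of subdigraphs of the random digraph that are vertex-disjoint unions of n/3 directed triangles (directed 3-cycles), μ_n = E_{D(n,m)}[X_n] and λ_n = E_{D(n,p)}[X_n]. Then X_n/μ_n → 1 in probability in D(n,m). If moreover limsup_{n→∞} p(n) < 1, then in D(n,p), ln(e^{β_n²/2} X_n/λ_n)/β_n converges in distribution to 𝒩(0,1), where β_n = √((1−p)/p). -/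
/-!
Directed triangle factors on `[n]`, `n = 3s`, correspond to the fixed-point-free permutations `σ` with
`σ ^ 3 = 1`, which form a single conjugacy class. Write `X` for the number of them contained in the
random digraph and `M = n (n - 1)` for the number of possible arcs.

**Concentration in `D(n,m)`.** A pair of factors with `j` common arcs lies in `D(n,m)` with
probability `ρ(2n - j)`, where `ρ(k) = ∏_{i<k} (m - i)/(M - i)`, and this is at most
`ρ(n)² e ^ (-y) (1 + y) ^ j (1 + O(1/n))` with `y ≈ (M - m)/m` (`rho_sub_le`, `rho_two_mul_le`).
Averaging over conjugates, `j` is distributed as the number of arcs of a standard factor which a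
uniformly random permutation maps to arcs of that factor (`sum_conj_eq`). This number is
asymptotically Poisson of mean `1`: choosing in each triangle no arc, one arc, or the whole triangle,
and counting the permutations compatible with the choice, gives
`E[(1 + y) ^ j] ≤ e ^ y (1 + O(1/n))` (`sum_pow_keptCount_le`). The two exponentials cancel, so
`E[X²] ≤ (1 + O(1/n)) E[X]²` uniformly in `m ≥ c M` (`second_moment_le`), and Chebyshev's inequality
applies (`concentration_Dnm`).

**Log-normality in `D(n,p)`.** Condition on the number `m` of arcs, a binomial variable, and let `Z`
be its standardization. For bounded `Z` a Taylor expansion of `log ρ(n)` gives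
`log (μ_m / λ) = -β²/2 + β Z + O(1/n)` (`log_rho_estimate`). By concentration in `D(n,m)` the
normalized logarithm of `X` is then close to `Z` with high probability (`logCount_close`,
`sandwich`), and `Z` is asymptotically normal (`tendsto_binCDF`, through characteristic functions).
-/

open Finset Filter MeasureTheory
open scoped Classical

noncomputable section

/-- `N = C(n,2)`; the number of possible directed edges is `2N`. -/
def Nn (n : ℕ) : ℕ := n.choose 2

/-- The set of all `2N` possible directed edges (ordered pairs of distinct vertices). -/
def arcsAll (n : ℕ) : Finset (Fin n × Fin n) :=
  Finset.univ.filter fun a => a.1 ≠ a.2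

/-- Probability of an event under the uniform random digraph `D(n,m)`
(uniform over all loopless digraphs on `[n]` with exactly `m` arcs). -/
def PrDnm (n m : ℕ) (A : Finset (Fin n × Fin n) → Prop) : ℝ :=
  ((((arcsAll n).powersetCard m).filter A).card : ℝ) /
    (((arcsAll n).powersetCard m).card : ℝ)

/-- Probability of an event under the binomial random digraph `D(n,p)`. -/
def PrDnp (n : ℕ) (p : ℝ) (A : Finset (Fin n × Fin n) → Prop) : ℝ :=
  ∑ D ∈ (arcsAll n).powerset.filter A,
    p ^ D.card * (1 - p) ^ ((arcsAll n).card - D.card)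

/-- Expectation of a real-valued digraph functional under `D(n,m)`. -/
def ExDnm (n m : ℕ) (X : Finset (Fin n × Fin n) → ℝ) : ℝ :=
  (∑ D ∈ (arcsAll n).powersetCard m, X D) /
    (((arcsAll n).powersetCard m).card : ℝ)

/-- Expectation of a real-valued digraph functional under `D(n,p)`. -/
def ExDnp (n : ℕ) (p : ℝ) (X : Finset (Fin n × Fin n) → ℝ) : ℝ :=
  ∑ D ∈ (arcsAll n).powerset,
    p ^ D.card * (1 - p) ^ ((arcsAll n).card - D.card) * X D

/-- `X_n`: the number of members of the family `S` contained in the digraph `D`. -/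
def countSubD (n : ℕ) (S : Finset (Finset (Fin n × Fin n))) (D : Finset (Fin n × Fin n)) : ℕ :=
  (S.filter fun H => H ⊆ D).card

/-- `f_j`: the number of ordered pairs `(H₁,H₂) ∈ S × S` with exactly `j` common arcs. -/
def fjD (n : ℕ) (S : Finset (Finset (Fin n × Fin n))) (j : ℕ) : ℕ :=
  ((S ×ˢ S).filter fun P => (P.1 ∩ P.2).card = j).card

/-- `r_j = f_j / f_{j-1}`. -/
def rjD (n : ℕ) (S : Finset (Finset (Fin n × Fin n))) (j : ℕ) : ℝ :=
  (fjD n S j : ℝ) / (fjD n S (j - 1) : ℝ)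

/-- The standard normal distribution function `Φ`. -/
def stdNormalCDF (x : ℝ) : ℝ :=
  ∫ t in Set.Iic x, Real.exp (-(t ^ 2) / 2) / Real.sqrt (2 * Real.pi)

/-- `A` is a directed triangle factor on `[n]`: a vertex-disjoint union of `n/3` directed
`3`-cycles, i.e. the arc set `{(v, σ v)}` of a fixed-point-free permutation `σ` with `σ³ = 1`. -/
def IsDirTriFactor (n : ℕ) (A : Finset (Fin n × Fin n)) : Prop :=
  ∃ σ : Equiv.Perm (Fin n), σ ^ 3 = 1 ∧ (∀ v : Fin n, σ v ≠ v) ∧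
    A = Finset.univ.image fun v => (v, σ v)

/-- The number of directed triangle factors contained in the digraph `D`. -/
def dirTriFactorCount (n : ℕ) (D : Finset (Fin n × Fin n)) : ℕ :=
  (D.powerset.filter (IsDirTriFactor n)).card

/-! ### Permutations keeping prescribed arcs of the standard triangle factor -/

/-- The arc leaving the `k`-th vertex of the `i`-th triangle of the standard triangle factor on
`Fin s × ZMod 3` is mapped by `τ` to an arc of the same factor. -/
def arcKept {s : ℕ} (τ : Equiv.Perm (Fin s × ZMod 3)) (i : Fin s) (k : ZMod 3) : Prop :=
  τ (i, k + 1) = ((τ (i, k)).1, (τ (i, k)).2 + 1)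

lemma card_perm_agree {α : Type*} [Fintype α] [DecidableEq α] (W : Finset α) (τ₀ : Equiv.Perm α) :
    (univ.filter fun τ : Equiv.Perm α => ∀ a ∈ W, τ a = τ₀ a).card
      = (Fintype.card α - W.card).factorial := by
  have h1 : (univ.filter fun τ : Equiv.Perm α => ∀ a ∈ W, τ a = τ₀ a).card
      = Fintype.card {f : Equiv.Perm α // ∀ a, ¬ (a ∉ W) → f a = a} := by
    rw [Fintype.card_subtype]
    refine Finset.card_bij' (fun τ _ => τ₀⁻¹ * τ) (fun τ _ => τ₀ * τ) ?_ ?_ ?_ ?_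
    · intro τ hτ
      simp only [mem_filter, mem_univ, true_and, not_not] at hτ ⊢
      intro a ha
      simp [hτ a ha]
    · intro τ hτ
      simp only [mem_filter, mem_univ, true_and, not_not] at hτ ⊢
      intro a ha
      simp [hτ a ha]
    · intro τ _; simp
    · intro τ _; simp
  rw [h1, ← Fintype.card_congr (Equiv.Perm.subtypeEquivSubtypePerm (fun a => a ∉ W)),
    Fintype.card_perm]
  congr 1
  rw [Fintype.card_subtype]
  rw [← Finset.card_compl]
  congr 1
  ext a; simp

lemma card_fst_injective (s L : ℕ) (ι : Type*) [Fintype ι] [DecidableEq ι] (hL : Fintype.card ι = L) :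
    (univ.filter fun g : ι → Fin s × ZMod 3 => Function.Injective fun i => (g i).1).card
      = s.descFactorial L * 3 ^ L := by
  rw [← Fintype.card_subtype]
  have e : {g : ι → Fin s × ZMod 3 // Function.Injective fun i => (g i).1} ≃
      (ι ↪ Fin s) × (ι → ZMod 3) :=
    { toFun := fun g => (⟨fun i => (g.1 i).1, g.2⟩, fun i => (g.1 i).2)
      invFun := fun q => ⟨fun i => (q.1 i, q.2 i), q.1.injective⟩
      left_inv := fun g => rfl
      right_inv := fun q => rfl }
  rw [Fintype.card_congr e, Fintype.card_prod, Fintype.card_embedding_eq, Fintype.card_fun, hL]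
  simp [ZMod.card]

/-- A family of permutations which preserve the arc at `(i, κ i)` for each `i ∈ A`, and whose
values on `W` are determined by those at the tails `(i, κ i)`, has at most
`3 ^ L * (s)_L * (3 s - |W|)!` members, where `L = |A|`: the tails are sent into distinct
triangles, since disjoint arcs have disjoint images while two arcs of one triangle share a vertex. -/
lemma card_arcKept_family_le {s : ℕ} (A : Finset (Fin s)) (κ : A → ZMod 3)
    (W : Finset (Fin s × ZMod 3)) (Q : Finset (Equiv.Perm (Fin s × ZMod 3)))
    (hQ : ∀ τ ∈ Q, ∀ i : A, arcKept τ i (κ i))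
    (hW : ∀ τ ∈ Q, ∀ τ' ∈ Q, (∀ i : A, τ (i, κ i) = τ' (i, κ i)) → ∀ w ∈ W, τ w = τ' w) :
    Q.card ≤ (3 * s - W.card).factorial * (s.descFactorial A.card * 3 ^ A.card) := by
  rw [← card_fst_injective s A.card A (by simp)]
  refine Finset.card_le_mul_card_image_of_maps_to
    (f := fun τ : Equiv.Perm (Fin s × ZMod 3) => fun i : A => τ (i, κ i)) ?_ _ ?_
  · intro τ hτ
    refine mem_filter.2 ⟨mem_univ _, ?_⟩
    intro i j hij
    simp only at hij
    -- equal first coordinates: the second coordinates differ by `0`, `1` or `2`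
    obtain ⟨d, hd⟩ : ∃ d : ZMod 3, (τ (j, κ j)).2 = (τ (i, κ i)).2 + d :=
      ⟨(τ (j, κ j)).2 - (τ (i, κ i)).2, by ring⟩
    have h1 := hQ τ hτ i
    have h2 := hQ τ hτ j
    unfold arcKept at h1 h2
    have hd3 : d = 0 ∨ d = 1 ∨ d + 1 = 0 := by
      clear hd; revert d; decide
    rcases hd3 with rfl | rfl | hd3
    · have : τ (j, κ j) = τ (i, κ i) := Prod.ext hij.symm (by simpa using hd)
      have := congrArg Prod.fst (τ.injective this)
      exact Subtype.ext this.symm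
    · have : τ (j, κ j) = τ (i, κ i + 1) := by
        rw [h1]; exact Prod.ext hij.symm hd
      have := congrArg Prod.fst (τ.injective this)
      exact Subtype.ext this.symm
    · have : τ (i, κ i) = τ (j, κ j + 1) := by
        rw [h2]; refine Prod.ext hij ?_
        simp only
        rw [hd, add_assoc, hd3, add_zero]
      have := congrArg Prod.fst (τ.injective this)
      exact Subtype.ext this
  · intro g _
    rcases (Q.filter fun τ => (fun i : A => τ (i, κ i)) = g).eq_empty_or_nonempty with h | ⟨τ₀, h0⟩
    · rw [h]; simp
    · rw [mem_filter] at h0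
      have := card_perm_agree W τ₀
      rw [Fintype.card_prod, Fintype.card_fin, ZMod.card, mul_comm s 3] at this
      rw [← this]
      refine Finset.card_le_card fun τ hτ => ?_
      rw [mem_filter] at hτ ⊢
      refine ⟨mem_univ _, hW τ hτ.1 τ₀ h0.1 fun i => ?_⟩
      exact congrFun (hτ.2.trans h0.2.symm) i

/-- One kept arc in each of `L = |A|` triangles: the tails determine the `2 L` endpoints. -/
lemma card_arcKept_le {s : ℕ} (A : Finset (Fin s)) (κ : A → ZMod 3) :
    (univ.filter fun τ : Equiv.Perm (Fin s × ZMod 3) => ∀ i : A, arcKept τ i (κ i)).card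
      ≤ (3 * s - 2 * A.card).factorial * (s.descFactorial A.card * 3 ^ A.card) := by
  set W : Finset (Fin s × ZMod 3) := (univ : Finset (A × Fin 2)).image
    fun q => ((q.1 : Fin s), κ q.1 + (q.2.val : ZMod 3)) with hWdef
  have hWc : W.card = 2 * A.card := by
    rw [hWdef, Finset.card_image_of_injective]
    · simp [mul_comm]
    · rintro ⟨i, a⟩ ⟨j, b⟩ h
      simp only [Prod.mk.injEq] at h
      obtain rfl := Subtype.ext h.1
      have := h.2
      simp only [add_right_inj] at this
      fin_cases a <;> fin_cases b <;> simp_all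
  rw [← hWc]
  refine card_arcKept_family_le A κ W _ (fun τ hτ => (mem_filter.1 hτ).2) ?_
  intro τ hτ τ' hτ' h w hw
  have h1 := (mem_filter.1 hτ).2
  have h2 := (mem_filter.1 hτ').2
  rw [hWdef, mem_image] at hw
  obtain ⟨⟨i, a⟩, -, rfl⟩ := hw
  have e1 := h1 i
  have e2 := h2 i
  unfold arcKept at e1 e2
  fin_cases a
  · simpa using h i
  · simp only [Nat.cast_one]
    rw [e1, e2, h i]

/-- If a second arc is kept in one of the `L` triangles, one further value is determined. -/
lemma card_arcKept_le' {s : ℕ} (A : Finset (Fin s)) (κ : A → ZMod 3) (i₀ : A) :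
    (univ.filter fun τ : Equiv.Perm (Fin s × ZMod 3) => (∀ i : A, arcKept τ i (κ i)) ∧
        arcKept τ i₀ (κ i₀ + 1)).card
      ≤ (3 * s - 2 * A.card - 1).factorial * (s.descFactorial A.card * 3 ^ A.card) := by
  set W₀ : Finset (Fin s × ZMod 3) := (univ : Finset (A × Fin 2)).image
    fun q => ((q.1 : Fin s), κ q.1 + (q.2.val : ZMod 3)) with hWdef
  have hW0c : W₀.card = 2 * A.card := by
    rw [hWdef, Finset.card_image_of_injective]
    · simp [mul_comm]
    · rintro ⟨i, a⟩ ⟨j, b⟩ h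
      simp only [Prod.mk.injEq] at h
      obtain rfl := Subtype.ext h.1
      have := h.2
      simp only [add_right_inj] at this
      fin_cases a <;> fin_cases b <;> simp_all
  set W := insert ((i₀ : Fin s), κ i₀ + 1 + 1) W₀ with hW
  have hWc : W.card = 2 * A.card + 1 := by
    rw [hW, Finset.card_insert_of_notMem, hW0c]
    rw [hWdef, mem_image]
    rintro ⟨⟨i, a⟩, -, h⟩
    simp only [Prod.mk.injEq] at h
    obtain rfl := Subtype.ext h.1
    have := h.2
    rw [add_assoc, add_right_inj] at this
    revert this
    fin_cases a
    · simp; decide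
    · simp
  have : 3 * s - 2 * A.card - 1 = 3 * s - W.card := by rw [hWc]; omega
  rw [this]
  refine card_arcKept_family_le A κ W _ (fun τ hτ => (mem_filter.1 hτ).2.1) ?_
  intro τ hτ τ' hτ' h w hw
  have h1 := (mem_filter.1 hτ).2
  have h2 := (mem_filter.1 hτ').2
  have key : ∀ i : A, τ (i, κ i + 1) = τ' (i, κ i + 1) := by
    intro i
    have e1 := h1.1 i
    have e2 := h2.1 i
    unfold arcKept at e1 e2
    rw [e1, e2, h i]
  rw [hW, mem_insert] at hw
  rcases hw with rfl | hw
  · have e1 := h1.2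
    have e2 := h2.2
    unfold arcKept at e1 e2
    rw [e1, e2, key]
  rw [hWdef, mem_image] at hw
  obtain ⟨⟨i, a⟩, -, rfl⟩ := hw
  fin_cases a
  · simpa using h i
  · simpa using key i

/-! ### Exponential moment of the number of kept arcs -/

/-- The number of arcs of the standard triangle factor kept by `τ`. -/
def keptCount {s : ℕ} (τ : Equiv.Perm (Fin s × ZMod 3)) : ℕ :=
  (univ.filter fun w : Fin s × ZMod 3 => arcKept τ w.1 w.2).card

/-- Two kept arcs in a triangle force the third one. -/
lemma arcKept_third {s : ℕ} (τ : Equiv.Perm (Fin s × ZMod 3)) (i : Fin s) (k : ZMod 3)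
    (h1 : arcKept τ i k) (h2 : arcKept τ i (k + 1)) : arcKept τ i (k + 1 + 1) := by
  have e : k + 1 + 1 + 1 = k := by clear h1 h2; revert k; decide
  unfold arcKept at *
  have e' : (τ (i, k)).2 + 1 + 1 + 1 = (τ (i, k)).2 := by
    generalize (τ (i, k)).2 = a
    revert a; decide
  rw [e, h2, h1]
  exact Prod.ext rfl e'.symm

/-- The event attached to an option: `some k` asks for the arc at `k` in triangle `i` to be kept,
`none` for the whole triangle. -/
def optEvent {s : ℕ} (τ : Equiv.Perm (Fin s × ZMod 3)) (i : Fin s) : Option (ZMod 3) → Prop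
  | none => ∀ k, arcKept τ i k
  | some k => arcKept τ i k

/-- The weight of an option: `y` for an arc, and `3y² + y³ = (1+y)³ - 1 - 3y` for a triangle. -/
def optWeight (y : ℝ) : Option (ZMod 3) → ℝ
  | none => 3 * y ^ 2 + y ^ 3
  | some _ => y

lemma optWeight_nonneg {y : ℝ} (hy : 0 ≤ y) (o : Option (ZMod 3)) : 0 ≤ optWeight y o := by
  cases o <;> simp only [optWeight] <;> positivity

lemma sum_optWeight (y : ℝ) : ∑ o, optWeight y o = 3 * y + (3 * y ^ 2 + y ^ 3) := by
  rw [Fintype.sum_option]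
  simp [optWeight, ZMod.card]
  ring

lemma triangle_factor_le {s : ℕ} (τ : Equiv.Perm (Fin s × ZMod 3)) (i : Fin s) (y : ℝ) :
    ∏ k : ZMod 3, (if arcKept τ i k then 1 + y else 1)
      ≤ 1 + ∑ o : Option (ZMod 3), optWeight y o * (if optEvent τ i o then 1 else 0) := by
  rw [Fintype.sum_option]
  have hall : (∀ k, arcKept τ i k) ↔ arcKept τ i 0 ∧ arcKept τ i 1 ∧ arcKept τ i 2 := by
    constructor
    · intro h; exact ⟨h _, h _, h _⟩
    · rintro ⟨h0, h1, h2⟩ k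
      have : k = 0 ∨ k = 1 ∨ k = 2 := by revert k; decide
      rcases this with rfl | rfl | rfl <;> assumption
  have t0 := arcKept_third τ i 0
  have t1 := arcKept_third τ i 1
  have t2 := arcKept_third τ i 2
  rw [show (0 : ZMod 3) + 1 + 1 = 2 from rfl, show (0 : ZMod 3) + 1 = 1 from rfl] at t0
  rw [show (1 : ZMod 3) + 1 + 1 = 0 from rfl, show (1 : ZMod 3) + 1 = 2 from rfl] at t1
  rw [show (2 : ZMod 3) + 1 + 1 = 1 from rfl, show (2 : ZMod 3) + 1 = 0 from rfl] at t2
  have hu : (univ : Finset (ZMod 3)) = {0, 1, 2} := rfl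
  rw [hu]
  rw [Finset.prod_insert (by decide), Finset.prod_insert (by decide), Finset.prod_singleton,
    Finset.sum_insert (by decide), Finset.sum_insert (by decide), Finset.sum_singleton]
  simp only [optEvent, optWeight, hall]
  by_cases h0 : arcKept τ i 0 <;> by_cases h1 : arcKept τ i 1 <;> by_cases h2 : arcKept τ i 2 <;>
    simp_all
  ring_nf
  exact le_refl _

lemma pow_keptCount_le {s : ℕ} (τ : Equiv.Perm (Fin s × ZMod 3)) {y : ℝ} (hy : 0 ≤ y) :
    (1 + y) ^ keptCount τ ≤ ∑ A : Finset (Fin s), ∏ i ∈ A,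
      ∑ o : Option (ZMod 3), optWeight y o * (if optEvent τ i o then 1 else 0) := by
  have h1 : (1 + y) ^ keptCount τ
      = ∏ i : Fin s, ∏ k : ZMod 3, (if arcKept τ i k then 1 + y else 1) := by
    rw [← Fintype.prod_prod_type' (fun i k => if arcKept τ i k then 1 + y else 1),
      Finset.prod_ite, Finset.prod_const, Finset.prod_const_one, mul_one]
    rfl
  rw [h1, ← Finset.powerset_univ, ← Finset.prod_one_add]
  refine Finset.prod_le_prod (fun i _ => Finset.prod_nonneg fun k _ => ?_)
    fun i _ => triangle_factor_le τ i y
  split_ifs <;> positivity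

/-- A family of requirements with at least one full triangle fixes one more vertex. -/
lemma card_optEvent_le {s : ℕ} (A : Finset (Fin s)) (κ : A → Option (ZMod 3)) :
    ((univ.filter fun τ : Equiv.Perm (Fin s × ZMod 3) => ∀ i : A, optEvent τ i (κ i)).card : ℝ)
      ≤ ((if ∀ i, κ i ≠ none then ((3 * s - 2 * A.card).factorial : ℝ) else 0)
          + ((3 * s - 2 * A.card - 1).factorial : ℝ)) *
        ((s.descFactorial A.card : ℝ) * 3 ^ A.card) := by
  have hopt : ∀ τ : Equiv.Perm (Fin s × ZMod 3), (∀ i : A, optEvent τ i (κ i)) →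
      ∀ i : A, arcKept τ i ((κ i).getD 0) := by
    intro τ h i
    have := h i
    cases hk : κ i with
    | none => rw [hk] at this; exact this 0
    | some k => rw [hk] at this; exact this
  split_ifs with h
  · have h1 := card_arcKept_le A (fun i => (κ i).getD 0)
    have h2 : ((univ.filter fun τ : Equiv.Perm (Fin s × ZMod 3) =>
        ∀ i : A, optEvent τ i (κ i)).card : ℝ) ≤
        ((3 * s - 2 * A.card).factorial : ℝ) * ((s.descFactorial A.card : ℝ) * 3 ^ A.card) := by
      have h1' := (Nat.cast_le (α := ℝ)).2 h1
      push_cast at h1'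
      refine le_trans ?_ h1'
      exact_mod_cast Finset.card_le_card fun τ hτ =>
        mem_filter.2 ⟨mem_univ _, hopt τ (mem_filter.1 hτ).2⟩
    refine h2.trans ?_
    gcongr
    simp
  · push Not at h
    obtain ⟨i₀, hi⟩ := h
    have h1 := card_arcKept_le' A (fun i => (κ i).getD 0) i₀
    have h2 : ((univ.filter fun τ : Equiv.Perm (Fin s × ZMod 3) =>
        ∀ i : A, optEvent τ i (κ i)).card : ℝ) ≤
        ((3 * s - 2 * A.card - 1).factorial : ℝ) *
          ((s.descFactorial A.card : ℝ) * 3 ^ A.card) := by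
      have h1' := (Nat.cast_le (α := ℝ)).2 h1
      push_cast at h1'
      refine le_trans ?_ h1'
      refine Nat.cast_le.2 (Finset.card_le_card fun τ hτ =>
        mem_filter.2 ⟨mem_univ _, hopt τ (mem_filter.1 hτ).2, ?_⟩)
      have := (mem_filter.1 hτ).2 i₀
      rw [hi] at this
      exact this _
    simpa using h2

lemma sum_prod_opt_le {s : ℕ} (A : Finset (Fin s)) {y : ℝ} (hy : 0 ≤ y) :
    ∑ τ : Equiv.Perm (Fin s × ZMod 3), ∏ i ∈ A,
      ∑ o : Option (ZMod 3), optWeight y o * (if optEvent τ i o then 1 else 0)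
    ≤ ((3 * y) ^ A.card * ((3 * s - 2 * A.card).factorial : ℝ)
        + (3 * y + (3 * y ^ 2 + y ^ 3)) ^ A.card * ((3 * s - 2 * A.card - 1).factorial : ℝ)) *
        ((s.descFactorial A.card : ℝ) * 3 ^ A.card) := by
  have h1 : ∀ τ : Equiv.Perm (Fin s × ZMod 3), (∏ i ∈ A,
      ∑ o : Option (ZMod 3), optWeight y o * (if optEvent τ i o then (1 : ℝ) else 0))
      = ∑ κ : A → Option (ZMod 3), (∏ i, optWeight y (κ i)) *
          (if ∀ i : A, optEvent τ i (κ i) then 1 else 0) := by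
    intro τ
    rw [← Finset.prod_coe_sort, Finset.prod_univ_sum, Fintype.piFinset_univ]
    refine Finset.sum_congr rfl fun κ _ => ?_
    rw [Finset.prod_mul_distrib]
    congr 1
    split_ifs with h
    · exact Finset.prod_eq_one fun i _ => by simp [h i]
    · push Not at h
      obtain ⟨i, hi⟩ := h
      exact Finset.prod_eq_zero (mem_univ i) (by simp [hi])
  simp_rw [h1]
  rw [Finset.sum_comm]
  have h2 : ∀ κ : A → Option (ZMod 3),
      ∑ τ : Equiv.Perm (Fin s × ZMod 3), (∏ i, optWeight y (κ i)) *
          (if ∀ i : A, optEvent τ i (κ i) then (1 : ℝ) else 0)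
      ≤ ((∏ i, (optWeight y (κ i) * if κ i ≠ none then 1 else 0)) *
          ((3 * s - 2 * A.card).factorial : ℝ)
        + (∏ i, optWeight y (κ i)) * ((3 * s - 2 * A.card - 1).factorial : ℝ)) *
        ((s.descFactorial A.card : ℝ) * 3 ^ A.card) := by
    intro κ
    rw [← Finset.mul_sum, Finset.sum_boole]
    have h3 := mul_le_mul_of_nonneg_left (card_optEvent_le A κ)
      (Finset.prod_nonneg fun i (_ : i ∈ univ) => optWeight_nonneg hy (κ i))
    refine h3.trans (le_of_eq ?_)
    rw [Finset.prod_mul_distrib]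
    have h4 : (∏ i, if κ i ≠ none then (1 : ℝ) else 0) = if ∀ i, κ i ≠ none then 1 else 0 := by
      split_ifs with h
      · exact Finset.prod_eq_one fun i _ => by simp [h i]
      · push Not at h
        obtain ⟨i, hi⟩ := h
        exact Finset.prod_eq_zero (mem_univ i) (by simp [hi])
    rw [h4]
    split_ifs <;> ring
  refine (Finset.sum_le_sum fun κ _ => h2 κ).trans (le_of_eq ?_)
  rw [← Finset.sum_mul, Finset.sum_add_distrib, ← Finset.sum_mul, ← Finset.sum_mul]
  have h5 : ∑ κ : A → Option (ZMod 3), ∏ i, optWeight y (κ i)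
      = (3 * y + (3 * y ^ 2 + y ^ 3)) ^ A.card := by
    rw [← Fintype.piFinset_univ, ← Finset.prod_univ_sum (fun _ : A => univ)
      (fun (_ : A) o => optWeight y o), sum_optWeight]
    simp
  have h6 : ∑ κ : A → Option (ZMod 3), ∏ i, (optWeight y (κ i) * if κ i ≠ none then 1 else 0)
      = (3 * y) ^ A.card := by
    rw [← Fintype.piFinset_univ, ← Finset.prod_univ_sum (fun _ : A => univ)
      (fun (_ : A) o => optWeight y o * if o ≠ none then 1 else 0), Fintype.sum_option]
    simp [optWeight, ZMod.card]
  rw [h5, h6]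

/-- This bounds the `L`-th term of the exponential moment by that of the Poisson law of mean `1`, up to
the factor `3 s / (3 s - 1)`. -/
lemma descFactorial_sq_le (s L : ℕ) (hL : L ≤ s) (hs : 1 ≤ s) :
    9 ^ L * s.descFactorial L ^ 2 * (3 * s - 2 * L).factorial * (3 * s - 1)
      ≤ 3 * s * (3 * s).factorial := by
  induction L with
  | zero => simp; rw [mul_comm]; gcongr; omega
  | succ L ih =>
    have ih := ih (by omega)
    obtain ⟨r, rfl⟩ : ∃ r, s = L + 1 + r := ⟨s - (L + 1), by omega⟩
    rcases Nat.eq_zero_or_pos L with rfl | hpos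
    · have : 3 * (0 + 1 + r) = (3 * r + 1) + 2 := by ring
      rw [this]
      simp [Nat.factorial_succ, Nat.descFactorial_succ]
      apply le_of_eq; ring
    · refine le_trans ?_ ih
      rw [Nat.descFactorial_succ]
      have e1 : 3 * (L + 1 + r) - 2 * L = (L + 3 * r + 1) + 2 := by omega
      have e2 : 3 * (L + 1 + r) - 2 * (L + 1) = L + 3 * r + 1 := by omega
      have e3 : L + 1 + r - L = r + 1 := by omega
      rw [e1, e2, e3, Nat.factorial_succ (L + 3 * r + 1 + 1), Nat.factorial_succ (L + 3 * r + 1)]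
      generalize (L + 1 + r).descFactorial L = a
      generalize (L + 3 * r + 1).factorial = b
      generalize 3 * (L + 1 + r) - 1 = d
      have : 9 * (r + 1) ^ 2 ≤ (L + 3 * r + 1 + 1 + 1) * (L + 3 * r + 1 + 1) := by nlinarith
      calc 9 ^ (L + 1) * ((r + 1) * a) ^ 2 * b * d
          = (9 ^ L * a ^ 2 * b * d) * (9 * (r + 1) ^ 2) := by ring
        _ ≤ (9 ^ L * a ^ 2 * b * d) * ((L + 3 * r + 1 + 1 + 1) * (L + 3 * r + 1 + 1)) := by gcongr
        _ = _ := by ring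

/-- The exponential moment of the number of kept arcs under a uniformly random permutation is at
most `e ^ y * (1 + O(1/n))`, where `n = 3 * s`: the count is asymptotically Poisson of mean `1`. -/
lemma sum_pow_keptCount_le (s : ℕ) (hs : 1 ≤ s) {y : ℝ} (hy : 0 ≤ y) :
    ∑ τ : Equiv.Perm (Fin s × ZMod 3), (1 + y) ^ keptCount τ
      ≤ ((3 * s).factorial : ℝ) * ((3 * s : ℝ) / (3 * s - 1) *
        (Real.exp y + 1 / s * Real.exp (y + (3 * y ^ 2 + y ^ 3) / 3))) := by
  have hs' : (1 : ℝ) ≤ s := by exact_mod_cast hs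
  have h1 : ∑ τ : Equiv.Perm (Fin s × ZMod 3), (1 + y) ^ keptCount τ ≤
      ∑ A : Finset (Fin s), ((3 * y) ^ A.card * ((3 * s - 2 * A.card).factorial : ℝ)
        + (3 * y + (3 * y ^ 2 + y ^ 3)) ^ A.card * ((3 * s - 2 * A.card - 1).factorial : ℝ)) *
        ((s.descFactorial A.card : ℝ) * 3 ^ A.card) := by
    refine (Finset.sum_le_sum fun τ _ => pow_keptCount_le τ hy).trans ?_
    rw [Finset.sum_comm]
    exact Finset.sum_le_sum fun A _ => sum_prod_opt_le A hy
  refine h1.trans ?_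
  have h2 := Finset.sum_powerset_apply_card (x := (univ : Finset (Fin s))) (fun L : ℕ =>
    ((3 * y) ^ L * ((3 * s - 2 * L).factorial : ℝ)
        + (3 * y + (3 * y ^ 2 + y ^ 3)) ^ L * ((3 * s - 2 * L - 1).factorial : ℝ)) *
        ((s.descFactorial L : ℝ) * 3 ^ L))
  rw [Finset.powerset_univ, Finset.card_univ, Fintype.card_fin] at h2
  rw [h2]
  set C : ℝ := (3 * s).factorial * ((3 * s : ℝ) / (3 * s - 1)) with hC
  have hC0 : 0 ≤ C := by
    rw [hC]
    have : (0 : ℝ) < 3 * s - 1 := by linarith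
    positivity
  set v := y + (3 * y ^ 2 + y ^ 3) / 3 with hv
  have hv0 : 0 ≤ v := by positivity
  have h3 : ∀ L ∈ range (s + 1), s.choose L • (((3 * y) ^ L * ((3 * s - 2 * L).factorial : ℝ)
        + (3 * y + (3 * y ^ 2 + y ^ 3)) ^ L * ((3 * s - 2 * L - 1).factorial : ℝ)) *
        ((s.descFactorial L : ℝ) * 3 ^ L)) ≤
        C * (y ^ L / L.factorial) + C * (1 / s) * (v ^ L / L.factorial) := by
    intro L hL
    have hL : L ≤ s := by rw [mem_range] at hL; omega
    have hd : (s.choose L : ℝ) = s.descFactorial L / L.factorial := by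
      rw [Nat.descFactorial_eq_factorial_mul_choose]
      push_cast
      field_simp
    have hmain : (9 : ℝ) ^ L * (s.descFactorial L : ℝ) ^ 2 * (3 * s - 2 * L).factorial ≤ C := by
      rw [hC, mul_div_assoc', le_div_iff₀ (by linarith)]
      have := descFactorial_sq_le s L hL hs
      have h' : ((9 ^ L * s.descFactorial L ^ 2 * (3 * s - 2 * L).factorial * (3 * s - 1) : ℕ) : ℝ)
        ≤ ((3 * s * (3 * s).factorial : ℕ) : ℝ) := by exact_mod_cast this
      rw [Nat.cast_mul, Nat.cast_sub (by omega)] at h'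
      push_cast at h'
      linarith
    have hfac : ((3 * s - 2 * L - 1).factorial : ℝ) ≤ 1 / s * (3 * s - 2 * L).factorial := by
      obtain ⟨q, hq⟩ : ∃ q, 3 * s - 2 * L = q + 1 := ⟨3 * s - 2 * L - 1, by omega⟩
      rw [hq, Nat.add_sub_cancel, Nat.factorial_succ]
      push_cast
      rw [div_mul_eq_mul_div, le_div_iff₀ (by linarith)]
      have : (s : ℝ) ≤ q + 1 := by
        have : s ≤ q + 1 := by omega
        exact_mod_cast this
      nlinarith [(Nat.cast_nonneg q.factorial : (0 : ℝ) ≤ _)]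
    rw [nsmul_eq_mul, hd]
    have e3 : 3 * y + (3 * y ^ 2 + y ^ 3) = 3 * v := by rw [hv]; ring
    rw [e3, mul_pow, mul_pow]
    have hLf : (0 : ℝ) < L.factorial := by exact_mod_cast Nat.factorial_pos L
    have e9 : (9 : ℝ) ^ L = 3 ^ L * 3 ^ L := by rw [← mul_pow]; norm_num
    rw [e9] at hmain
    set f := ((3 * s - 2 * L).factorial : ℝ)
    set g := ((3 * s - 2 * L - 1).factorial : ℝ)
    set a := (s.descFactorial L : ℝ)
    set t := (3 : ℝ) ^ L
    have hmain2 : t * t * a ^ 2 * g ≤ C * (1 / s) := by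
      calc t * t * a ^ 2 * g ≤ t * t * a ^ 2 * (1 / s * f) := by gcongr
        _ = (t * t * a ^ 2 * f) * (1 / s) := by ring
        _ ≤ _ := by gcongr
    calc a / L.factorial * ((t * y ^ L * f + t * v ^ L * g) * (a * t))
        = (t * t * a ^ 2 * f) * (y ^ L / L.factorial)
          + (t * t * a ^ 2 * g) * (v ^ L / L.factorial) := by ring
      _ ≤ _ := by gcongr
  refine (Finset.sum_le_sum h3).trans ?_
  rw [Finset.sum_add_distrib, ← Finset.mul_sum, ← Finset.mul_sum]
  have e1 := Real.sum_le_exp_of_nonneg hy (s + 1)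
  have e2 := Real.sum_le_exp_of_nonneg hv0 (s + 1)
  calc _ ≤ C * Real.exp y + C * (1 / s) * Real.exp v := by gcongr
    _ = _ := by rw [hC]; ring

/-! ### Triangle factors as permutations -/

/-- The fixed-point-free permutations `σ` of `Fin n` with `σ ^ 3 = 1`; they encode the directed
triangle factors through `arcSet`. -/
def triPerms (n : ℕ) : Finset (Equiv.Perm (Fin n)) :=
  univ.filter fun σ => σ ^ 3 = 1 ∧ ∀ v, σ v ≠ v

/-- The arc set `{(v, σ v)}`. -/
def arcSet {n : ℕ} (σ : Equiv.Perm (Fin n)) : Finset (Fin n × Fin n) :=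
  univ.image fun v => (v, σ v)

/-- The number of vertices at which two permutations agree. -/
def agreeCount {n : ℕ} (σ σ' : Equiv.Perm (Fin n)) : ℕ :=
  (univ.filter fun v => σ v = σ' v).card

lemma mem_triPerms {n : ℕ} {σ : Equiv.Perm (Fin n)} :
    σ ∈ triPerms n ↔ σ ^ 3 = 1 ∧ ∀ v, σ v ≠ v := by
  simp [triPerms]

lemma mem_arcSet {n : ℕ} {σ : Equiv.Perm (Fin n)} {a : Fin n × Fin n} :
    a ∈ arcSet σ ↔ σ a.1 = a.2 := by
  simp only [arcSet, mem_image, mem_univ, true_and]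
  constructor
  · rintro ⟨v, rfl⟩; rfl
  · intro h; exact ⟨a.1, Prod.ext rfl h⟩

lemma card_arcSet {n : ℕ} (σ : Equiv.Perm (Fin n)) : (arcSet σ).card = n := by
  rw [arcSet, Finset.card_image_of_injective]
  · simp
  · intro a b h; exact congrArg Prod.fst h

lemma arcSet_subset {n : ℕ} {σ : Equiv.Perm (Fin n)} (h : σ ∈ triPerms n) :
    arcSet σ ⊆ arcsAll n := by
  intro a ha
  rw [mem_arcSet] at ha
  simp only [arcsAll, mem_filter, mem_univ, true_and]
  rw [← ha]
  exact ((mem_triPerms.1 h).2 a.1).symm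

lemma arcSet_injective {n : ℕ} : Function.Injective (arcSet (n := n)) := by
  intro σ σ' h
  ext1 v
  have : (v, σ v) ∈ arcSet σ' := by rw [← h, mem_arcSet]
  exact (mem_arcSet.1 this).symm

lemma card_arcSet_inter {n : ℕ} (σ σ' : Equiv.Perm (Fin n)) :
    (arcSet σ ∩ arcSet σ').card = agreeCount σ σ' := by
  have : arcSet σ ∩ arcSet σ' = (univ.filter fun v => σ v = σ' v).image fun v => (v, σ v) := by
    ext a
    simp only [mem_inter, mem_arcSet, mem_image, mem_filter, mem_univ, true_and]
    constructor
    · rintro ⟨h1, h2⟩; exact ⟨a.1, h1.trans h2.symm, Prod.ext rfl h1⟩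
    · rintro ⟨v, hv, rfl⟩; exact ⟨rfl, hv.symm⟩
  rw [this, Finset.card_image_of_injective]
  · rfl
  · intro a b h; exact congrArg Prod.fst h

lemma card_arcSet_union {n : ℕ} (σ σ' : Equiv.Perm (Fin n)) :
    (arcSet σ ∪ arcSet σ').card = 2 * n - agreeCount σ σ' := by
  have := Finset.card_union_add_card_inter (arcSet σ) (arcSet σ')
  rw [card_arcSet_inter, card_arcSet, card_arcSet] at this
  omega

lemma agreeCount_le {n : ℕ} (σ σ' : Equiv.Perm (Fin n)) : agreeCount σ σ' ≤ n := by
  unfold agreeCount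
  exact (Finset.card_le_univ _).trans (by simp)

lemma dirTriFactorCount_eq {n : ℕ} (D : Finset (Fin n × Fin n)) :
    dirTriFactorCount n D = ((triPerms n).filter fun σ => arcSet σ ⊆ D).card := by
  rw [dirTriFactorCount, ← Finset.card_image_of_injective _ (arcSet_injective (n := n))]
  congr 1
  ext H
  simp only [mem_filter, mem_powerset, mem_image, mem_triPerms, IsDirTriFactor]
  constructor
  · rintro ⟨h, σ, h1, h2, h3⟩
    exact ⟨σ, ⟨⟨h1, h2⟩, by rw [arcSet, ← h3]; exact h⟩, h3.symm⟩
  · rintro ⟨σ, ⟨⟨h1, h2⟩, h⟩, rfl⟩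
    exact ⟨h, σ, h1, h2, rfl⟩

/-- The rotation of all standard triangles, transported to `Fin (3 * s)`. -/
lemma exists_standard (s : ℕ) : ∃ (e : Fin s × ZMod 3 ≃ Fin (3 * s)) (σ : Equiv.Perm (Fin (3 * s))),
    σ ∈ triPerms (3 * s) ∧ ∀ i k, e (i, k + 1) = σ (e (i, k)) := by
  have e : Fin s × ZMod 3 ≃ Fin (3 * s) := Fintype.equivOfCardEq (by simp [ZMod.card, mul_comm])
  let sh : Equiv.Perm (Fin s × ZMod 3) := Equiv.prodCongr (Equiv.refl _) (Equiv.addRight 1)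
  have hsh : ∀ w, sh w = (w.1, w.2 + 1) := fun w => rfl
  refine ⟨e, e.permCongr sh, ?_, ?_⟩
  · rw [mem_triPerms]
    constructor
    · ext v
      obtain ⟨⟨i, k⟩, rfl⟩ := e.surjective v
      simp only [pow_succ, pow_zero, one_mul, Equiv.Perm.mul_apply, Equiv.permCongr_apply,
        Equiv.symm_apply_apply, hsh, Equiv.Perm.one_apply]
      rw [show k + 1 + 1 + 1 = k by revert k; decide]
    · intro v hv
      obtain ⟨⟨i, k⟩, rfl⟩ := e.surjective v
      simp only [Equiv.permCongr_apply, Equiv.symm_apply_apply, hsh] at hv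
      have := congrArg Prod.snd (e.injective hv)
      simp at this
  · intro i k
    simp [Equiv.permCongr_apply, hsh]

lemma cycleType_triPerm {s : ℕ} {σ : Equiv.Perm (Fin (3 * s))} (h : σ ∈ triPerms (3 * s)) :
    σ.cycleType = Multiset.replicate s 3 := by
  rw [mem_triPerms] at h
  have : Fact (Nat.Prime 3) := ⟨Nat.prime_three⟩
  have h1 := Equiv.Perm.cycleType_of_pow_prime_eq_one h.1
  have h2 := Equiv.Perm.sum_cycleType σ
  have h3 : σ.support = univ := by
    ext v; simp [h.2 v]
  rw [h3, h1, Finset.card_univ, Fintype.card_fin, Multiset.sum_replicate, smul_eq_mul] at h2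
  rw [h1]
  congr 1
  omega

/-- Every triangle factor is the standard one in suitable coordinates. -/
lemma exists_coordinates {s : ℕ} {σ : Equiv.Perm (Fin (3 * s))} (h : σ ∈ triPerms (3 * s)) :
    ∃ e : Fin s × ZMod 3 ≃ Fin (3 * s), ∀ i k, e (i, k + 1) = σ (e (i, k)) := by
  obtain ⟨e, σ₀, h0, he⟩ := exists_standard s
  have hc : IsConj σ₀ σ := Equiv.Perm.isConj_of_cycleType_eq
    ((cycleType_triPerm h0).trans (cycleType_triPerm h).symm)
  obtain ⟨c, hc⟩ := isConj_iff.1 hc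
  refine ⟨e.trans c, fun i k => ?_⟩
  rw [← hc]
  simp [he]

lemma triPerms_nonempty (s : ℕ) : (triPerms (3 * s)).Nonempty := by
  obtain ⟨_, σ, h, _⟩ := exists_standard s
  exact ⟨σ, h⟩

/-- The number of arcs shared by a fixed factor and a random conjugate of another one is distributed as
the number of arcs of the standard factor kept by a random permutation. -/
lemma sum_conj_eq {s : ℕ} {σ₁ σ₂ : Equiv.Perm (Fin (3 * s))} (h1 : σ₁ ∈ triPerms (3 * s))
    (h2 : σ₂ ∈ triPerms (3 * s)) (x : ℝ) :
    ∑ c : Equiv.Perm (Fin (3 * s)), x ^ agreeCount σ₁ (c * σ₂ * c⁻¹)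
      = ∑ τ : Equiv.Perm (Fin s × ZMod 3), x ^ keptCount τ := by
  obtain ⟨e₁, he1⟩ := exists_coordinates h1
  obtain ⟨e₂, he2⟩ := exists_coordinates h2
  refine Fintype.sum_equiv ((Equiv.inv _).trans (Equiv.equivCongr e₁.symm e₂.symm)) _ _ fun c => ?_
  congr 1
  unfold agreeCount keptCount
  refine Finset.card_bij' (fun v _ => e₁.symm v) (fun w _ => e₁ w) ?_ ?_
    (fun v _ => by simp) (fun w _ => by simp)
  all_goals
    have key : ∀ w : Fin s × ZMod 3, σ₁ (e₁ w) = (c * σ₂ * c⁻¹) (e₁ w) ↔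
        arcKept (((Equiv.inv _).trans (Equiv.equivCongr e₁.symm e₂.symm)) c) w.1 w.2 := by
      rintro ⟨i, k⟩
      have hcc : ∀ v, c⁻¹ (c v) = v := fun v => by simp
      unfold arcKept
      simp only [Equiv.trans_apply, Equiv.inv_apply, Equiv.equivCongr_apply_apply, Equiv.symm_symm,
        Equiv.Perm.mul_apply]
      rw [he1, ← (c⁻¹).injective.eq_iff (a := σ₁ _), hcc,
        ← e₂.symm.injective.eq_iff]
      rw [show (e₂.symm (σ₂ (c⁻¹ (e₁ (i, k))))) = ((e₂.symm (c⁻¹ (e₁ (i, k)))).1,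
        (e₂.symm (c⁻¹ (e₁ (i, k)))).2 + 1) from by
          rw [Equiv.symm_apply_eq, he2]
          simp]
  · intro v hv
    rw [mem_filter] at hv ⊢
    refine ⟨mem_univ _, (key _).1 ?_⟩
    simpa using hv.2
  · intro w hw
    rw [mem_filter] at hw ⊢
    exact ⟨mem_univ _, (key _).2 hw.2⟩

/-- The exponential moment of the number of common arcs of two random triangle factors: since conjugation
permutes the factors, the second one may be replaced by its average over all conjugates. -/
lemma sum_agreeCount_le {s : ℕ} (hs : 1 ≤ s) {y : ℝ} (hy : 0 ≤ y) :
    ∑ σ₁ ∈ triPerms (3 * s), ∑ σ₂ ∈ triPerms (3 * s), (1 + y) ^ agreeCount σ₁ σ₂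
      ≤ ((triPerms (3 * s)).card : ℝ) ^ 2 * ((3 * s : ℝ) / (3 * s - 1) *
        (Real.exp y + 1 / s * Real.exp (y + (3 * y ^ 2 + y ^ 3) / 3))) := by
  set B := (3 * s : ℝ) / (3 * s - 1) *
        (Real.exp y + 1 / s * Real.exp (y + (3 * y ^ 2 + y ^ 3) / 3)) with hB
  have hfac : (0 : ℝ) < ((3 * s).factorial : ℝ) := by exact_mod_cast Nat.factorial_pos _
  have key : ∀ σ₁ ∈ triPerms (3 * s),
      ∑ σ₂ ∈ triPerms (3 * s), (1 + y) ^ agreeCount σ₁ σ₂ ≤ (triPerms (3 * s)).card * B := by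
    intro σ₁ h1
    -- averaging over all conjugates of `σ₂`
    have hinv : ∀ c : Equiv.Perm (Fin (3 * s)),
        ∑ σ₂ ∈ triPerms (3 * s), (1 + y) ^ agreeCount σ₁ (c * σ₂ * c⁻¹)
        = ∑ σ₂ ∈ triPerms (3 * s), (1 + y) ^ agreeCount σ₁ σ₂ := by
      intro c
      refine Finset.sum_bij' (fun σ _ => c * σ * c⁻¹) (fun σ _ => c⁻¹ * σ * c) ?_ ?_
        (fun σ _ => by group) (fun σ _ => by group) (fun σ _ => rfl)
      · intro σ hσ
        rw [mem_triPerms] at hσ ⊢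
        refine ⟨by rw [conj_pow, hσ.1]; simp, fun v hv => ?_⟩
        simp only [Equiv.Perm.mul_apply] at hv
        exact hσ.2 (c⁻¹ v) (Equiv.Perm.eq_inv_iff_eq.2 hv)
      · intro σ hσ
        rw [mem_triPerms] at hσ ⊢
        refine ⟨?_, fun v hv => ?_⟩
        · have := conj_pow (a := c⁻¹) (b := σ) (i := 3)
          rw [inv_inv] at this
          rw [this, hσ.1]; simp
        · simp only [Equiv.Perm.mul_apply] at hv
          exact hσ.2 (c v) (by rw [Equiv.Perm.inv_eq_iff_eq] at hv; exact hv)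
    have hsum : ((3 * s).factorial : ℝ) * ∑ σ₂ ∈ triPerms (3 * s), (1 + y) ^ agreeCount σ₁ σ₂
        ≤ ((3 * s).factorial : ℝ) * ((triPerms (3 * s)).card * B) := by
      calc ((3 * s).factorial : ℝ) * ∑ σ₂ ∈ triPerms (3 * s), (1 + y) ^ agreeCount σ₁ σ₂
          = ∑ c : Equiv.Perm (Fin (3 * s)), ∑ σ₂ ∈ triPerms (3 * s),
              (1 + y) ^ agreeCount σ₁ (c * σ₂ * c⁻¹) := by
            rw [Finset.sum_congr rfl fun c _ => hinv c, Finset.sum_const, Finset.card_univ,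
              Fintype.card_perm, Fintype.card_fin, nsmul_eq_mul]
        _ = ∑ σ₂ ∈ triPerms (3 * s), ∑ τ : Equiv.Perm (Fin s × ZMod 3),
              (1 + y) ^ keptCount τ := by
            rw [Finset.sum_comm]
            exact Finset.sum_congr rfl fun σ₂ h2 => sum_conj_eq h1 h2 _
        _ ≤ ∑ σ₂ ∈ triPerms (3 * s), ((3 * s).factorial : ℝ) * B :=
            Finset.sum_le_sum fun _ _ => sum_pow_keptCount_le s hs hy
        _ = _ := by rw [Finset.sum_const, nsmul_eq_mul]; ring
    exact le_of_mul_le_mul_left hsum hfac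
  refine (Finset.sum_le_sum key).trans (le_of_eq ?_)
  rw [Finset.sum_const, nsmul_eq_mul]; ring

/-! ### The second moment in `D(n,m)` -/

/-- `∏_{i<k} (m - i)/(M - i)`: the probability that a random `m`-subset of an `M`-set contains a
given `k`-subset. -/
def rho (M m k : ℕ) : ℝ := ∏ i ∈ range k, ((m : ℝ) - i) / ((M : ℝ) - i)

lemma card_arcsAll (n : ℕ) : (arcsAll n).card = n * (n - 1) := by
  have : arcsAll n = (univ : Finset (Fin n)).offDiag := by
    ext a; simp [arcsAll]
  rw [this, Finset.offDiag_card]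
  simp [Nat.mul_sub]

lemma choose_eq_rho {M m k : ℕ} (hk : k ≤ m) (hm : m ≤ M) :
    ((M - k).choose (m - k) : ℝ) = rho M m k * (M.choose m : ℝ) := by
  induction k with
  | zero => simp [rho]
  | succ k ih =>
    have ih := ih (by omega)
    obtain ⟨a, rfl⟩ : ∃ a, m = k + 1 + a := ⟨m - (k + 1), by omega⟩
    obtain ⟨b, rfl⟩ : ∃ b, M = k + 1 + a + b := ⟨M - (k + 1 + a), by omega⟩
    have e1 : k + 1 + a + b - k = (a + b) + 1 := by omega
    have e2 : k + 1 + a - k = a + 1 := by omega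
    have e3 : k + 1 + a + b - (k + 1) = a + b := by omega
    have e4 : k + 1 + a - (k + 1) = a := by omega
    rw [e1, e2] at ih
    rw [e3, e4]
    have h := Nat.add_one_mul_choose_eq (a + b) a
    have h' : ((a : ℝ) + b + 1) * ((a + b).choose a : ℝ)
        = ((a + b + 1).choose (a + 1) : ℝ) * ((a : ℝ) + 1) := by exact_mod_cast h
    rw [ih] at h'
    rw [rho] at h' ⊢
    rw [Finset.prod_range_succ]
    push_cast at h' ⊢
    have d1 : (k : ℝ) + 1 + a + b - k = a + b + 1 := by ring
    have d2 : (k : ℝ) + 1 + a - k = a + 1 := by ring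
    rw [d1, d2]
    have : (0 : ℝ) < a + b + 1 := by positivity
    field_simp
    linarith

/-- The mean of `X` in `D(n,m)`. -/
lemma sum_count_eq {n m : ℕ} (hn : n ≤ m) (hm : m ≤ (arcsAll n).card) :
    ExDnm n m (fun D => (dirTriFactorCount n D : ℝ))
      = ((triPerms n).card : ℝ) * rho (arcsAll n).card m n := by
  have hc : (0 : ℝ) < ((arcsAll n).card.choose m : ℝ) := by exact_mod_cast Nat.choose_pos hm
  rw [ExDnm, Finset.card_powersetCard, div_eq_iff hc.ne']
  have h1 : ∀ D, (dirTriFactorCount n D : ℝ)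
      = ∑ σ ∈ triPerms n, if arcSet σ ⊆ D then (1 : ℝ) else 0 := by
    intro D
    rw [dirTriFactorCount_eq, Finset.sum_boole]
  simp_rw [h1]
  rw [Finset.sum_comm]
  have h2 : ∀ σ ∈ triPerms n, (∑ D ∈ (arcsAll n).powersetCard m,
      if arcSet σ ⊆ D then (1 : ℝ) else 0)
      = rho (arcsAll n).card m n * ((arcsAll n).card.choose m : ℝ) := by
    intro σ hσ
    rw [Finset.sum_boole, card_filter_powersetCard_subset _ _ _ (arcSet_subset hσ)
      (by rw [card_arcSet]; exact hn), card_arcSet, choose_eq_rho hn hm]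
  rw [Finset.sum_congr rfl h2, Finset.sum_const, nsmul_eq_mul]
  ring

lemma sum_count_sq_eq {n m : ℕ} (hn : 2 * n ≤ m) (hm : m ≤ (arcsAll n).card) :
    ExDnm n m (fun D => (dirTriFactorCount n D : ℝ) ^ 2)
      = ∑ σ ∈ triPerms n, ∑ σ' ∈ triPerms n,
          rho (arcsAll n).card m (2 * n - agreeCount σ σ') := by
  have hc : (0 : ℝ) < ((arcsAll n).card.choose m : ℝ) := by exact_mod_cast Nat.choose_pos hm
  rw [ExDnm, Finset.card_powersetCard, div_eq_iff hc.ne']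
  have h1 : ∀ D, (dirTriFactorCount n D : ℝ) ^ 2
      = ∑ σ ∈ triPerms n, ∑ σ' ∈ triPerms n,
          if arcSet σ ∪ arcSet σ' ⊆ D then (1 : ℝ) else 0 := by
    intro D
    have hX : (((triPerms n).filter fun σ => arcSet σ ⊆ D).card : ℝ)
        = ∑ σ ∈ triPerms n, if arcSet σ ⊆ D then (1 : ℝ) else 0 := by rw [Finset.sum_boole]
    rw [dirTriFactorCount_eq, sq, hX, Finset.sum_mul_sum]
    refine Finset.sum_congr rfl fun σ _ => Finset.sum_congr rfl fun σ' _ => ?_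
    simp only [Finset.union_subset_iff]
    by_cases h : arcSet σ ⊆ D <;> by_cases h' : arcSet σ' ⊆ D <;> simp [h, h']
  simp_rw [h1]
  rw [Finset.sum_comm, Finset.sum_mul]
  refine Finset.sum_congr rfl fun σ hσ => ?_
  rw [Finset.sum_comm, Finset.sum_mul]
  refine Finset.sum_congr rfl fun σ' hσ' => ?_
  have hle : 2 * n - agreeCount σ σ' ≤ m := by omega
  rw [Finset.sum_boole, card_filter_powersetCard_subset _ _ _
    (Finset.union_subset (arcSet_subset hσ) (arcSet_subset hσ'))
    (by rw [card_arcSet_union]; exact hle), card_arcSet_union,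
    choose_eq_rho hle hm]

lemma rho_pos {M m k : ℕ} (hk : k ≤ m) (hm : m ≤ M) : 0 < rho M m k := by
  refine Finset.prod_pos fun i hi => ?_
  rw [mem_range] at hi
  have h1 : (i : ℝ) < m := by exact_mod_cast lt_of_lt_of_le hi hk
  have h2 : (m : ℝ) ≤ M := by exact_mod_cast hm
  exact div_pos (by linarith) (by linarith)

lemma rho_sub_le {M m n j : ℕ} (hn : 2 * n ≤ m) (hm : m ≤ M) (hj : j ≤ 2 * n) :
    rho M m (2 * n - j) ≤ rho M m (2 * n) *
      (1 + ((M : ℝ) - m) / ((m : ℝ) - 2 * n + 1)) ^ j := by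
  have hm' : (m : ℝ) ≤ M := by exact_mod_cast hm
  have hn' : (2 : ℝ) * n ≤ m := by exact_mod_cast hn
  induction j with
  | zero => simp
  | succ j ih =>
    have ih := ih (by omega)
    obtain ⟨k, hk⟩ : ∃ k, 2 * n - j = k + 1 := ⟨2 * n - j - 1, by omega⟩
    have hk' : 2 * n - (j + 1) = k := by omega
    rw [hk'] 
    rw [hk, rho, Finset.prod_range_succ, ← rho] at ih
    have hk2 : (k : ℝ) + 1 ≤ 2 * n := by
      have : k + 1 ≤ 2 * n := by omega
      exact_mod_cast this
    have p1 : (0 : ℝ) < m - k := by linarith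
    have p2 : (0 : ℝ) < M - k := by linarith
    have p3 : (0 : ℝ) < m - 2 * n + 1 := by linarith
    set x := 1 + ((M : ℝ) - m) / ((m : ℝ) - 2 * n + 1) with hx
    have hx' : (M - k : ℝ) / (m - k) ≤ x := by
      have : (M - k : ℝ) / (m - k) = 1 + (M - m) / (m - k) := by field_simp; ring
      rw [this, hx]
      gcongr
      linarith
    have hr : rho M m k = rho M m k * ((m - k) / (M - k)) * ((M - k : ℝ) / (m - k)) := by
      field_simp
    have hx0 : 0 < x := lt_of_lt_of_le (by positivity) hx'
    have hpos : 0 < rho M m k := rho_pos (by omega) hm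
    rw [hr, pow_succ, ← mul_assoc]
    have hpos2 : 0 < rho M m (2 * n) := rho_pos hn hm
    gcongr

/-- Negative correlation of containing two disjoint sets of `n` arcs; the exponential factor compensates
the exponential moment of the number of common arcs. -/
lemma rho_two_mul_le {M m n : ℕ} (hn : 2 * n ≤ m) (hm : m ≤ M) (hm0 : 0 < m) :
    rho M m (2 * n) ≤ rho M m n ^ 2 *
      Real.exp (-((n : ℝ) ^ 2 * ((M : ℝ) - m) / (m * M))) := by
  have hm' : (m : ℝ) ≤ M := by exact_mod_cast hm
  have hm0' : (0 : ℝ) < m := by exact_mod_cast hm0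
  have hn' : (2 : ℝ) * n ≤ m := by exact_mod_cast hn
  have hsplit : rho M m (2 * n) = rho M m n *
      ∏ i ∈ range n, ((m : ℝ) - (n + i : ℕ)) / ((M : ℝ) - (n + i : ℕ)) := by
    rw [two_mul, rho, Finset.prod_range_add, ← rho]
  have hexp : Real.exp (-((n : ℝ) ^ 2 * ((M : ℝ) - m) / (m * M)))
      = ∏ i ∈ range n, Real.exp (-((n : ℝ) * ((M : ℝ) - m) / (m * M))) := by
    rw [Finset.prod_const, Finset.card_range, ← Real.exp_nat_mul]
    congr 1; ring
  rw [hsplit, sq, mul_assoc]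
  have hpos : 0 < rho M m n := rho_pos (by omega) hm
  refine mul_le_mul_of_nonneg_left ?_ hpos.le
  rw [hexp, rho, ← Finset.prod_mul_distrib]
  refine Finset.prod_le_prod (fun i hi => ?_) (fun i hi => ?_)
  all_goals
    rw [mem_range] at hi
    have hi' : (i : ℝ) < n := by exact_mod_cast hi
    have hi0 : (0 : ℝ) ≤ i := by positivity
    push_cast
    have p1 : (0 : ℝ) < m - i := by linarith
    have p2 : (0 : ℝ) < M - i := by linarith
    have p3 : (0 : ℝ) < M - (n + i) := by linarith
    have p4 : (0 : ℝ) < m - (n + i) := by linarith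
  · positivity
  · have h1 : (n : ℝ) * (M - m) / (m * M) ≤ n * (M - m) / ((m - i) * (M - (n + i))) := by
      have : (0 : ℝ) ≤ M - m := by linarith
      gcongr
      · linarith
      · linarith
    have h2 := Real.one_sub_le_exp_neg ((n : ℝ) * (M - m) / (m * M))
    have h3 : ((m : ℝ) - (n + i)) / (M - (n + i)) =
        (m - i) / (M - i) * (1 - n * (M - m) / ((m - i) * (M - (n + i)))) := by
      field_simp
      ring
    rw [h3]
    gcongr
    linarith

/-- The bound for the ratio `E[X²]/E[X]²` in `D(3s, m)` when `m` is at least a fraction `c` of all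
arcs. It tends to `1`, see `tendsto_momentBound`. -/
def momentBound (c : ℝ) (s : ℕ) : ℝ :=
  Real.exp (4 / (c ^ 2 * (3 * s - 1))) * ((3 * s : ℝ) / (3 * s - 1) *
    (1 + 1 / s * Real.exp ((3 * (2 / c) ^ 2 + (2 / c) ^ 3) / 3)))

/-- For `m ≥ c M` one has `E[X²] ≤ (1 + o(1)) E[X]²`. With `y ≈ (M - m)/m`, a pair of factors with `j`
common arcs contributes about `ρ² e ^ (-y) (1 + y) ^ j`, and averaging `(1 + y) ^ j` yields `e ^ y`. -/
lemma second_moment_le {c : ℝ} (hc : 0 < c) {s m : ℕ} (hs : 1 ≤ s)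
    (hcs : 4 ≤ c * (3 * s - 1)) (hm : m ≤ (arcsAll (3 * s)).card)
    (hcm : c * (arcsAll (3 * s)).card ≤ m) :
    2 * (3 * s) ≤ m ∧
    ExDnm (3 * s) m (fun D => (dirTriFactorCount (3 * s) D : ℝ) ^ 2)
      ≤ momentBound c s * ExDnm (3 * s) m (fun D => (dirTriFactorCount (3 * s) D : ℝ)) ^ 2 := by
  have hs' : (1 : ℝ) ≤ s := by exact_mod_cast hs
  have hM : ((arcsAll (3 * s)).card : ℝ) = 3 * s * (3 * s - 1) := by
    rw [card_arcsAll, Nat.cast_mul, Nat.cast_sub (by omega)]; push_cast; ring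
  set M := (arcsAll (3 * s)).card with hMdef
  have hm' : (m : ℝ) ≤ M := by exact_mod_cast hm
  have hMpos : (0 : ℝ) < M := by rw [hM]; nlinarith
  -- `2n ≤ (c/2) M`
  have h2n : 2 * (3 * (s : ℝ)) ≤ c / 2 * M := by rw [hM]; nlinarith
  have hlow : c / 2 * M ≤ (m : ℝ) - 2 * (3 * s) + 1 := by linarith
  have hcM : 0 < c / 2 * M := by positivity
  have hnm : 2 * (3 * s) ≤ m := by
    have : 2 * (3 * (s : ℝ)) ≤ m := by linarith
    exact_mod_cast this
  refine ⟨hnm, ?_⟩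
  have hm0 : 0 < m := by omega
  have hm0' : (0 : ℝ) < m := by exact_mod_cast hm0
  set y := ((M : ℝ) - m) / ((m : ℝ) - 2 * (3 * s : ℕ) + 1) with hy
  push_cast at hy
  have hden : (0 : ℝ) < (m : ℝ) - 2 * (3 * s) + 1 := by linarith
  have hy0 : 0 ≤ y := by rw [hy]; exact div_nonneg (by linarith) hden.le
  have hyc : y ≤ 2 / c := by
    rw [hy, div_le_div_iff₀ hden hc]
    nlinarith
  rw [sum_count_sq_eq hnm hm, sum_count_eq (by omega) hm]
  have hρ : 0 < rho M m (3 * s) := rho_pos (by omega) hm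
  have hρ2 : 0 < rho M m (2 * (3 * s)) := rho_pos hnm hm
  have hsum : ∑ σ ∈ triPerms (3 * s), ∑ σ' ∈ triPerms (3 * s),
      rho M m (2 * (3 * s) - agreeCount σ σ')
      ≤ rho M m (2 * (3 * s)) * ∑ σ ∈ triPerms (3 * s), ∑ σ' ∈ triPerms (3 * s),
        (1 + y) ^ agreeCount σ σ' := by
    rw [Finset.mul_sum]
    refine Finset.sum_le_sum fun σ _ => ?_
    rw [Finset.mul_sum]
    refine Finset.sum_le_sum fun σ' _ => ?_
    have := agreeCount_le σ σ'
    exact rho_sub_le hnm hm (by omega)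
  refine hsum.trans ?_
  have hA := sum_agreeCount_le hs hy0
  have hR := rho_two_mul_le hnm hm hm0
  have h3s : (0 : ℝ) < 3 * s - 1 := by linarith
  -- the exponents `y` and `n²(M-m)/(mM)` nearly cancel
  have hexp : -(((3 * s : ℕ) : ℝ) ^ 2 * ((M : ℝ) - m) / (m * M)) + y
      ≤ 4 / (c ^ 2 * (3 * s - 1)) := by
    have e1 : ((M : ℝ) - m) / m ≤ ((3 * s : ℕ) : ℝ) ^ 2 * ((M : ℝ) - m) / (m * M) := by
      rw [div_le_div_iff₀ hm0' (by positivity)]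
      have : (M : ℝ) ≤ ((3 * s : ℕ) : ℝ) ^ 2 := by rw [hM]; push_cast; nlinarith
      have h0 : (0 : ℝ) ≤ (M - m) * m := mul_nonneg (by linarith) hm0'.le
      nlinarith [mul_le_mul_of_nonneg_left this h0]
    have e2 : y - ((M : ℝ) - m) / m
        = ((M : ℝ) - m) * (2 * (3 * s) - 1) / (m * (m - 2 * (3 * s) + 1)) := by
      rw [hy, div_sub_div _ _ hden.ne' hm0'.ne', mul_comm (m : ℝ) (_ + 1)]
      congr 1
      ring
    have e3 : ((M : ℝ) - m) * (2 * (3 * s) - 1) / (m * (m - 2 * (3 * s) + 1))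
        ≤ M * (2 * (3 * s)) / (c * M * (c / 2 * M)) := by
      gcongr <;> linarith
    have e4 : (M : ℝ) * (2 * (3 * s)) / (c * M * (c / 2 * M)) = 4 / (c ^ 2 * (3 * s - 1)) := by
      rw [hM]; field_simp; ring
    linarith
  set T := ((triPerms (3 * s)).card : ℝ) with hT
  set Z := (3 * y ^ 2 + y ^ 3) / 3 with hZ
  have hZle : Z ≤ (3 * (2 / c) ^ 2 + (2 / c) ^ 3) / 3 := by rw [hZ]; gcongr
  calc rho M m (2 * (3 * s)) * ∑ σ ∈ triPerms (3 * s), ∑ σ' ∈ triPerms (3 * s),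
        (1 + y) ^ agreeCount σ σ'
      ≤ (rho M m (3 * s) ^ 2 *
        Real.exp (-(((3 * s : ℕ) : ℝ) ^ 2 * ((M : ℝ) - m) / (m * M)))) *
        (T ^ 2 * ((3 * s : ℝ) / (3 * s - 1) *
        (Real.exp y + 1 / s * Real.exp (y + Z)))) := by
        gcongr
    _ = (T * rho M m (3 * s)) ^ 2 *
        Real.exp (-(((3 * s : ℕ) : ℝ) ^ 2 * ((M : ℝ) - m) / (m * M)) + y) *
        ((3 * s : ℝ) / (3 * s - 1) * (1 + 1 / s * Real.exp Z)) := by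
        rw [Real.exp_add, Real.exp_add]; ring
    _ ≤ (T * rho M m (3 * s)) ^ 2 * Real.exp (4 / (c ^ 2 * (3 * s - 1))) *
        ((3 * s : ℝ) / (3 * s - 1) *
          (1 + 1 / s * Real.exp ((3 * (2 / c) ^ 2 + (2 / c) ^ 3) / 3))) := by
        gcongr
    _ = _ := by rw [momentBound]; ring

lemma tendsto_momentBound {c : ℝ} (hc : 0 < c) :
    Tendsto (momentBound c) atTop (nhds 1) := by
  have hs : Tendsto (fun s : ℕ => (s : ℝ)) atTop atTop := tendsto_natCast_atTop_atTop
  have h3 : Tendsto (fun s : ℕ => (3 * s - 1 : ℝ)) atTop atTop :=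
    tendsto_atTop_add_const_right _ _ (hs.const_mul_atTop (by norm_num))
  have h1 : Tendsto (fun s : ℕ => 4 / (c ^ 2 * (3 * s - 1) : ℝ)) atTop (nhds 0) :=
    (h3.const_mul_atTop (by positivity)).const_div_atTop 4
  have h2 : Tendsto (fun s : ℕ => (3 * s : ℝ) / (3 * s - 1)) atTop (nhds 1) := by
    have : Tendsto (fun s : ℕ => 1 + 1 / (3 * s - 1 : ℝ)) atTop (nhds (1 + 0)) :=
      (h3.const_div_atTop 1).const_add 1
    rw [add_zero] at this
    refine this.congr' ?_
    filter_upwards [h3.eventually_gt_atTop 0] with s hs0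
    field_simp
    ring
  have h4 : Tendsto (fun s : ℕ => 1 + 1 / (s : ℝ) *
      Real.exp ((3 * (2 / c) ^ 2 + (2 / c) ^ 3) / 3)) atTop (nhds (1 + 0 * 
      Real.exp ((3 * (2 / c) ^ 2 + (2 / c) ^ 3) / 3))) :=
    ((hs.const_div_atTop 1).mul_const _).const_add 1
  have := ((Real.continuous_exp.tendsto 0).comp h1).mul (h2.mul h4)
  simp only [Real.exp_zero, zero_mul, add_zero, mul_one] at this
  exact this

lemma chebyshev_Dnm {n m : ℕ} (hm : m ≤ (arcsAll n).card) (X : Finset (Fin n × Fin n) → ℝ)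
    {G ε : ℝ} (hε : 0 < ε) (hμ : 0 < ExDnm n m X)
    (h2 : ExDnm n m (fun D => X D ^ 2) ≤ G * ExDnm n m X ^ 2) :
    PrDnm n m (fun D => ε < |X D / ExDnm n m X - 1|) ≤ (G - 1) / ε ^ 2 := by
  set μ := ExDnm n m X with hμd
  set P := (arcsAll n).powersetCard m with hP
  have hc : (0 : ℝ) < (P.card : ℝ) := by
    rw [hP, Finset.card_powersetCard]; exact_mod_cast Nat.choose_pos hm
  have hX : ∑ D ∈ P, X D = μ * P.card := by
    rw [hμd, ExDnm, div_mul_cancel₀ _ hc.ne']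
  have hX2 : ∑ D ∈ P, X D ^ 2 ≤ G * μ ^ 2 * P.card := by
    rw [ExDnm, div_le_iff₀ hc] at h2
    exact h2
  rw [PrDnm, div_le_div_iff₀ hc (by positivity)]
  have h3 : ((P.filter fun D => ε < |X D / μ - 1|).card : ℝ) * ε ^ 2
      ≤ ∑ D ∈ P, (X D / μ - 1) ^ 2 := by
    rw [← nsmul_eq_mul, ← Finset.sum_const]
    refine (Finset.sum_le_sum fun D hD => ?_).trans
      (Finset.sum_le_sum_of_subset_of_nonneg (Finset.filter_subset _ _)
        fun D _ _ => sq_nonneg (X D / μ - 1))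
    rw [← sq_abs (X D / μ - 1)]
    have := (mem_filter.1 hD).2
    gcongr
  refine h3.trans ?_
  have h4 : ∑ D ∈ P, (X D / μ - 1) ^ 2
      = (∑ D ∈ P, X D ^ 2) / μ ^ 2 - 2 * (∑ D ∈ P, X D) / μ + P.card := by
    rw [Finset.sum_div, mul_div_assoc, Finset.sum_div, Finset.mul_sum, ← Finset.sum_sub_distrib,
      Finset.card_eq_sum_ones, Nat.cast_sum, ← Finset.sum_add_distrib]
    refine Finset.sum_congr rfl fun D _ => ?_
    push_cast
    field_simp
    ring
  rw [h4, hX]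
  have h5 : (∑ D ∈ P, X D ^ 2) / μ ^ 2 ≤ G * P.card := by
    rw [div_le_iff₀ (by positivity)]
    linarith
  have h6 : 2 * (μ * P.card) / μ = 2 * (P.card : ℝ) := by field_simp
  rw [h6]
  linarith

/-- Concentration in `D(3s, m)`, with a rate depending only on the density bound `c`. -/
lemma concentration_Dnm {c : ℝ} (hc : 0 < c) {s m : ℕ} (hs : 1 ≤ s)
    (hcs : 4 ≤ c * (3 * s - 1)) (hm : m ≤ (arcsAll (3 * s)).card)
    (hcm : c * (arcsAll (3 * s)).card ≤ m) {ε : ℝ} (hε : 0 < ε) :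
    PrDnm (3 * s) m (fun D => ε < |(dirTriFactorCount (3 * s) D : ℝ) /
      ExDnm (3 * s) m (fun D' => (dirTriFactorCount (3 * s) D' : ℝ)) - 1|)
      ≤ (momentBound c s - 1) / ε ^ 2 := by
  obtain ⟨hnm, h⟩ := second_moment_le hc hs hcs hm hcm
  refine chebyshev_Dnm hm _ hε ?_ h
  rw [sum_count_eq (by omega) hm]
  have h1 : (0 : ℝ) < ((triPerms (3 * s)).card : ℝ) := by
    exact_mod_cast (triPerms_nonempty s).card_pos
  have h2 : 0 < rho (arcsAll (3 * s)).card m (3 * s) := rho_pos (by omega) hm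
  positivity

/-! ### Passing to the sequence `n = 3s`, and concentration in `D(n,m)` -/

lemma filter_three_eq :
    (atTop ⊓ Filter.principal {n : ℕ | 3 ∣ n} : Filter ℕ) = map (fun s : ℕ => 3 * s) atTop := by
  ext S
  rw [Filter.mem_inf_principal, Filter.mem_map, Filter.mem_atTop_sets, Filter.mem_atTop_sets]
  constructor
  · rintro ⟨a, ha⟩
    exact ⟨a, fun b hb => ha (3 * b) (by omega) ⟨b, rfl⟩⟩
  · rintro ⟨a, ha⟩
    refine ⟨3 * a, fun b hb => ?_⟩
    rintro ⟨k, rfl⟩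
    exact ha k (by omega)

lemma two_mul_Nn (n : ℕ) : 2 * (Nn n : ℝ) = ((arcsAll n).card : ℝ) := by
  have h : 2 * Nn n = (arcsAll n).card := by
    rw [Nn, card_arcsAll, Nat.choose_two_right,
      Nat.mul_div_cancel' (Nat.even_mul_pred_self n).two_dvd]
  exact_mod_cast h

lemma PrDnm_nonneg (n m : ℕ) (A : Finset (Fin n × Fin n) → Prop) : 0 ≤ PrDnm n m A := by
  rw [PrDnm]; positivity

lemma PrDnm_le_one (n m : ℕ) (A : Finset (Fin n × Fin n) → Prop) : PrDnm n m A ≤ 1 := by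
  rw [PrDnm]
  refine div_le_one_of_le₀ ?_ (by positivity)
  exact_mod_cast Finset.card_filter_le _ _

lemma PrDnm_mono (n m : ℕ) {A B : Finset (Fin n × Fin n) → Prop}
    (h : ∀ D, A D → B D) : PrDnm n m A ≤ PrDnm n m B := by
  rw [PrDnm, PrDnm]
  gcongr
  exact h _

lemma PrDnm_compl {n m : ℕ} (hm : m ≤ (arcsAll n).card) (A : Finset (Fin n × Fin n) → Prop) :
    PrDnm n m A = 1 - PrDnm n m (fun D => ¬ A D) := by
  have hc : (0 : ℝ) < (((arcsAll n).powersetCard m).card : ℝ) := by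
    rw [Finset.card_powersetCard]; exact_mod_cast Nat.choose_pos hm
  rw [PrDnm, PrDnm, eq_sub_iff_add_eq, ← add_div, div_eq_one_iff_eq hc.ne']
  have h := Finset.card_filter_add_card_filter_not (s := (arcsAll n).powersetCard m) A
  rw [← h]
  push_cast
  congr!

lemma eventually_four_le {c : ℝ} (hc : 0 < c) :
    ∀ᶠ s : ℕ in atTop, 1 ≤ s ∧ 4 ≤ c * (3 * s - 1) := by
  have hs : Tendsto (fun s : ℕ => (s : ℝ)) atTop atTop := tendsto_natCast_atTop_atTop
  have h3 : Tendsto (fun s : ℕ => (3 * s - 1 : ℝ)) atTop atTop :=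
    tendsto_atTop_add_const_right _ _ (hs.const_mul_atTop (by norm_num))
  filter_upwards [eventually_ge_atTop 1, (h3.const_mul_atTop hc).eventually_ge_atTop 4]
    with s h1 h2 using ⟨h1, h2⟩

lemma tendsto_PrDnm {c : ℝ} (hc : 0 < c) (q : ℕ → ℝ) (m : ℕ → ℕ)
    (hq : ∀ s, q s < 1) (hm : ∀ s, (m s : ℝ) = q s * (2 * (Nn (3 * s) : ℝ)))
    (hcq : ∀ᶠ s in atTop, c ≤ q s) {ε : ℝ} (hε : 0 < ε) :
    Tendsto (fun s : ℕ => PrDnm (3 * s) (m s) fun D =>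
      ε < |(dirTriFactorCount (3 * s) D : ℝ) /
        ExDnm (3 * s) (m s) (fun D' => (dirTriFactorCount (3 * s) D' : ℝ)) - 1|)
      atTop (nhds 0) := by
  have hlim : Tendsto (fun s => (momentBound c s - 1) / ε ^ 2) atTop (nhds 0) := by
    simpa using ((tendsto_momentBound hc).sub_const 1).div_const (ε ^ 2)
  refine squeeze_zero' (Eventually.of_forall fun s => PrDnm_nonneg _ _ _) ?_ hlim
  filter_upwards [hcq, eventually_four_le hc] with s h1 h2
  have hM : (m s : ℝ) = q s * ((arcsAll (3 * s)).card : ℝ) := by rw [hm, two_mul_Nn]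
  have h0 : (0 : ℝ) ≤ ((arcsAll (3 * s)).card : ℝ) := by positivity
  refine concentration_Dnm hc h2.1 h2.2 ?_ ?_ hε
  · have : (m s : ℝ) ≤ ((arcsAll (3 * s)).card : ℝ) := by
      rw [hM]; nlinarith [hq s]
    exact_mod_cast this
  · rw [hM]; gcongr

/-! ### Conditioning `D(n,p)` on the number of arcs -/

/-- The binomial weight `P(Bin(M,p) = m)`. -/
def binW (M : ℕ) (p : ℝ) (m : ℕ) : ℝ := (M.choose m : ℝ) * p ^ m * (1 - p) ^ (M - m)

lemma binW_nonneg {p : ℝ} (h0 : 0 ≤ p) (h1 : p ≤ 1) (M m : ℕ) : 0 ≤ binW M p m := by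
  have : 0 ≤ 1 - p := by linarith
  rw [binW]; positivity

lemma sum_binW (M : ℕ) (p : ℝ) : ∑ m ∈ range (M + 1), binW M p m = 1 := by
  have h := add_pow p (1 - p) M
  rw [add_sub_cancel, one_pow] at h
  rw [h]
  refine Finset.sum_congr rfl fun m _ => ?_
  rw [binW]; ring

/-- `D(n,p)` is the mixture of the `D(n,m)` with binomial weights. -/
lemma PrDnp_eq (n : ℕ) (p : ℝ) (A : Finset (Fin n × Fin n) → Prop) :
    PrDnp n p A = ∑ m ∈ range ((arcsAll n).card + 1),
      binW (arcsAll n).card p m * PrDnm n m A := by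
  rw [PrDnp, Finset.sum_filter, Finset.sum_powerset]
  refine Finset.sum_congr rfl fun m hm => ?_
  have hm' : m ≤ (arcsAll n).card := by rw [mem_range] at hm; omega
  have hc : (0 : ℝ) < ((arcsAll n).card.choose m : ℝ) := by exact_mod_cast Nat.choose_pos hm'
  rw [← Finset.sum_filter, PrDnm, Finset.card_powersetCard, binW]
  have : ∀ D ∈ ((arcsAll n).powersetCard m).filter A,
      p ^ D.card * (1 - p) ^ ((arcsAll n).card - D.card)
        = p ^ m * (1 - p) ^ ((arcsAll n).card - m) := by
    intro D hD
    rw [(mem_powersetCard.1 (mem_filter.1 hD).1).2]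
  rw [Finset.sum_congr rfl this, Finset.sum_const, nsmul_eq_mul]
  field_simp

lemma ExDnp_eq (n : ℕ) (p : ℝ) :
    ExDnp n p (fun D => (dirTriFactorCount n D : ℝ)) = ((triPerms n).card : ℝ) * p ^ n := by
  rw [ExDnp]
  have h1 : ∀ D, (dirTriFactorCount n D : ℝ)
      = ∑ σ ∈ triPerms n, if arcSet σ ⊆ D then (1 : ℝ) else 0 := by
    intro D
    rw [dirTriFactorCount_eq, Finset.sum_boole]
  simp_rw [h1, Finset.mul_sum]
  rw [Finset.sum_comm, ← nsmul_eq_mul, ← Finset.sum_const]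
  refine Finset.sum_congr rfl fun σ hσ => ?_
  simp_rw [mul_ite, mul_one, mul_zero]
  have hsub := arcSet_subset hσ
  have hI : (arcsAll n).powerset.filter (fun D => arcSet σ ⊆ D)
      = (arcsAll n \ arcSet σ).powerset.image (arcSet σ ∪ ·) := by
    rw [← Finset.Icc_eq_image_powerset hsub]
    ext D; simp [and_comm]
  rw [← Finset.sum_filter, hI, Finset.sum_image]
  · have h2 : ∀ E ∈ (arcsAll n \ arcSet σ).powerset,
        p ^ (arcSet σ ∪ E).card * (1 - p) ^ ((arcsAll n).card - (arcSet σ ∪ E).card)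
          = p ^ n * (p ^ E.card * (1 - p) ^ ((arcsAll n \ arcSet σ).card - E.card)) := by
      intro E hE
      rw [mem_powerset] at hE
      have hd : Disjoint (arcSet σ) E :=
        (Finset.disjoint_sdiff).mono_right hE
      rw [Finset.card_union_of_disjoint hd, Finset.card_sdiff_of_subset hsub, card_arcSet,
        pow_add, Nat.sub_sub]
      ring
    rw [Finset.sum_congr rfl h2, ← Finset.mul_sum, Finset.sum_pow_mul_eq_add_pow]
    simp
  · intro E hE F hF hEF
    have hE' : Disjoint (arcSet σ) E :=
      (Finset.disjoint_sdiff).mono_right (mem_powerset.1 hE)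
    have hF' : Disjoint (arcSet σ) F :=
      (Finset.disjoint_sdiff).mono_right (mem_powerset.1 hF)
    have := congrArg (· \ arcSet σ) hEF
    simpa [Finset.union_sdiff_distrib, Finset.sdiff_eq_self_of_disjoint hE'.symm,
      Finset.sdiff_eq_self_of_disjoint hF'.symm] using this

/-! ### The central limit theorem for the binomial distribution -/

/-- The standardized value `(m - Mp)/√(Mp(1-p))`. -/
def zScore (M : ℕ) (p : ℝ) (m : ℕ) : ℝ := ((m : ℝ) - M * p) / Real.sqrt (M * (p * (1 - p)))

/-- The law of the standardized binomial variable, as a measure on `ℝ`. -/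
def binLaw (M : ℕ) (p : ℝ) : Measure ℝ :=
  ∑ m ∈ range (M + 1), ENNReal.ofReal (binW M p m) • Measure.dirac (zScore M p m)

/-- `P(Z ≤ x)` for the standardized binomial variable `Z`. -/
def binCDF (M : ℕ) (p x : ℝ) : ℝ :=
  ∑ m ∈ range (M + 1), if zScore M p m ≤ x then binW M p m else 0

lemma binLaw_Iic {p : ℝ} (h0 : 0 ≤ p) (h1 : p ≤ 1) (M : ℕ) (x : ℝ) :
    binLaw M p (Set.Iic x) = ENNReal.ofReal (binCDF M p x) := by
  rw [binLaw, binCDF, ENNReal.ofReal_sum_of_nonneg]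
  · rw [Measure.finsetSum_apply]
    refine Finset.sum_congr rfl fun m _ => ?_
    rw [Measure.smul_apply, Measure.dirac_apply' _ measurableSet_Iic]
    by_cases h : zScore M p m ≤ x <;> simp [h]
  · intro m _
    split_ifs
    · exact binW_nonneg h0 h1 M m
    · exact le_rfl

lemma isProbabilityMeasure_binLaw {p : ℝ} (h0 : 0 ≤ p) (h1 : p ≤ 1) (M : ℕ) :
    IsProbabilityMeasure (binLaw M p) := by
  constructor
  rw [binLaw, Measure.finsetSum_apply]
  simp only [Measure.smul_apply, measure_univ, smul_eq_mul, mul_one]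
  rw [← ENNReal.ofReal_sum_of_nonneg fun m _ => binW_nonneg h0 h1 M m, sum_binW, ENNReal.ofReal_one]

/-- The characteristic function of the binomial law is the `M`-th power of that of a centred
Bernoulli variable. -/
lemma charFun_binLaw {p : ℝ} (h0 : 0 ≤ p) (h1 : p ≤ 1) (M : ℕ) (t : ℝ) :
    charFun (binLaw M p) t =
      ((p : ℂ) * Complex.exp ((1 - p) * (t * Complex.I / Real.sqrt (M * (p * (1 - p))))) +
        (1 - p) * Complex.exp (-p * (t * Complex.I / Real.sqrt (M * (p * (1 - p)))))) ^ M := by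
  set a : ℂ := t * Complex.I / Real.sqrt (M * (p * (1 - p))) with ha
  rw [charFun_apply_real, binLaw, integral_finsetSum_measure]
  · rw [add_pow]
    refine Finset.sum_congr rfl fun m hm => ?_
    have hmM : m ≤ M := by rw [mem_range] at hm; omega
    rw [integral_smul_measure, integral_dirac, ENNReal.toReal_ofReal (binW_nonneg h0 h1 M m),
      mul_pow, mul_pow, ← Complex.exp_nat_mul, ← Complex.exp_nat_mul]
    have hexp : Complex.exp (t * zScore M p m * Complex.I)
        = Complex.exp (m * ((1 - p) * a)) * Complex.exp ((M - m : ℕ) * (-p * a)) := by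
      rw [← Complex.exp_add]
      congr 1
      rw [ha, zScore, Nat.cast_sub hmM]
      push_cast
      ring
    rw [hexp, binW, Complex.real_smul]
    push_cast
    ring
  · intro m _
    refine Integrable.smul_measure ?_ ENNReal.ofReal_ne_top
    exact integrable_dirac (by simp)

lemma norm_pow_sub_pow_le' {a b : ℂ} (ha : ‖a‖ ≤ 1) (hb : ‖b‖ ≤ 1) (M : ℕ) :
    ‖a ^ M - b ^ M‖ ≤ M * ‖a - b‖ := by
  induction M with
  | zero => simp
  | succ M ih =>
    have e : a ^ (M + 1) - b ^ (M + 1) = a ^ M * (a - b) + (a ^ M - b ^ M) * b := by ring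
    rw [e]
    refine (norm_add_le _ _).trans ?_
    rw [norm_mul, norm_mul, norm_pow]
    have h1 : ‖a‖ ^ M ≤ 1 := pow_le_one₀ (norm_nonneg _) ha
    have h2 : ‖a‖ ^ M * ‖a - b‖ ≤ 1 * ‖a - b‖ := by gcongr
    have h3 : ‖a ^ M - b ^ M‖ * ‖b‖ ≤ (M * ‖a - b‖) * 1 := by gcongr
    push_cast
    linarith

lemma norm_exp_sub_le {x : ℂ} (hx : ‖x‖ ≤ 1) :
    ‖Complex.exp x - (1 + x + x ^ 2 / 2)‖ ≤ ‖x‖ ^ 3 := by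
  have h := Complex.exp_bound hx (n := 3) (by norm_num)
  simp only [Finset.sum_range_succ, Finset.sum_range_zero] at h
  norm_num [Nat.factorial] at h
  refine h.trans ?_
  have : 0 ≤ ‖x‖ ^ 3 := by positivity
  linarith

lemma norm_exp_sub_le' {x : ℂ} (hx : ‖x‖ ≤ 1) :
    ‖Complex.exp x - (1 + x)‖ ≤ ‖x‖ ^ 2 := by
  have h := Complex.exp_bound hx (n := 2) (by norm_num)
  simp only [Finset.sum_range_succ, Finset.sum_range_zero] at h
  norm_num [Nat.factorial] at h
  refine h.trans ?_
  have : 0 ≤ ‖x‖ ^ 2 := by positivity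
  linarith

/-- Quantitative form of the convergence of the characteristic function. -/
lemma norm_charFun_binLaw_sub_le {p κ : ℝ} (h0 : 0 < p) (h1 : p < 1) (hκ : 0 < κ)
    (hpκ : κ ≤ p * (1 - p)) {M : ℕ} (hM : 0 < M) {t : ℝ}
    (ht : |t| ≤ Real.sqrt (M * κ)) (ht' : t ^ 2 / 2 ≤ M) :
    ‖charFun (binLaw M p) t - Complex.exp (-(t ^ 2 / 2 : ℝ))‖
      ≤ |t| ^ 3 / (κ * Real.sqrt (M * κ)) + (t ^ 2 / 2) ^ 2 / M := by
  have hM' : (0 : ℝ) < M := by exact_mod_cast hM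
  have hq : 0 < p * (1 - p) := mul_pos h0 (by linarith)
  set σ := Real.sqrt (M * (p * (1 - p))) with hσ
  set τ := Real.sqrt (M * κ) with hτ
  have hτ0 : 0 < τ := Real.sqrt_pos.2 (by positivity)
  have hτσ : τ ≤ σ := Real.sqrt_le_sqrt (by gcongr)
  have hσ0 : 0 < σ := by linarith
  have hσ2 : σ ^ 2 = M * (p * (1 - p)) := Real.sq_sqrt (by positivity)
  have hτ2 : τ ^ 2 = M * κ := Real.sq_sqrt (by positivity)
  rw [charFun_binLaw h0.le h1.le, ← hσ]
  set a : ℂ := t * Complex.I / σ with ha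
  have hna : ‖a‖ = |t| / σ := by
    rw [ha, norm_div, norm_mul, Complex.norm_I, mul_one, Complex.norm_real, Complex.norm_real,
      Real.norm_eq_abs, Real.norm_eq_abs, abs_of_pos hσ0]
  have hna' : ‖a‖ ≤ |t| / τ := by rw [hna]; gcongr
  have hna1 : ‖a‖ ≤ 1 := hna'.trans (by rw [div_le_one hτ0]; exact ht)
  have ha2 : a ^ 2 = -((t ^ 2 / σ ^ 2 : ℝ) : ℂ) := by
    rw [ha, div_pow, mul_pow, Complex.I_sq]; push_cast; ring
  set φ : ℂ := p * Complex.exp ((1 - p) * a) + (1 - p) * Complex.exp (-p * a) with hφ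
  set b : ℂ := Complex.exp (-(t ^ 2 / 2 / M : ℝ)) with hb
  have hbM : Complex.exp (-(t ^ 2 / 2 : ℝ)) = b ^ M := by
    rw [hb, ← Complex.exp_nat_mul]
    congr 1
    have hMc : (M : ℂ) ≠ 0 := by exact_mod_cast hM.ne'
    push_cast
    field_simp
  have hre : ∀ x : ℝ, ‖Complex.exp (x * a)‖ = 1 := by
    intro x
    have : (x : ℂ) * a = ((x * t / σ : ℝ) : ℂ) * Complex.I := by rw [ha]; push_cast; ring
    rw [this, Complex.norm_exp_ofReal_mul_I]
  have e1 : ((1 : ℂ) - p) = ((1 - p : ℝ) : ℂ) := by push_cast; rfl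
  have e2 : (-p : ℂ) = ((-p : ℝ) : ℂ) := by push_cast; rfl
  have hφ1 : ‖φ‖ ≤ 1 := by
    rw [hφ, e1, e2]
    refine (norm_add_le _ _).trans ?_
    rw [norm_mul, norm_mul, hre, hre, Complex.norm_real, Complex.norm_real, Real.norm_eq_abs,
      Real.norm_eq_abs, abs_of_pos h0, abs_of_pos (by linarith : 0 < 1 - p)]
    linarith
  have hb1 : ‖b‖ ≤ 1 := by
    rw [hb, Complex.norm_exp]
    have : ((-((t ^ 2 / 2 / M : ℝ) : ℂ))).re = -(t ^ 2 / 2 / M) := by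
      rw [Complex.neg_re, Complex.ofReal_re]
    rw [this, Real.exp_le_one_iff]
    have : 0 ≤ t ^ 2 / 2 / (M : ℝ) := by positivity
    linarith
  rw [hbM]
  refine (norm_pow_sub_pow_le' hφ1 hb1 M).trans ?_
  -- second order expansion of both factors
  have hx1 : ‖((1 : ℂ) - p) * a‖ ≤ ‖a‖ := by
    rw [e1, norm_mul, Complex.norm_real, Real.norm_eq_abs, abs_of_pos (by linarith : 0 < 1 - p)]
    nlinarith [norm_nonneg a]
  have hx2 : ‖(-p : ℂ) * a‖ ≤ ‖a‖ := by
    rw [e2, norm_mul, Complex.norm_real, Real.norm_eq_abs, abs_neg, abs_of_pos h0]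
    nlinarith [norm_nonneg a]
  have r1 := (norm_exp_sub_le (hx1.trans hna1)).trans (pow_le_pow_left₀ (norm_nonneg _) hx1 3)
  have r2 := (norm_exp_sub_le (hx2.trans hna1)).trans (pow_le_pow_left₀ (norm_nonneg _) hx2 3)
  have hφr : ‖φ - (1 + p * (1 - p) * a ^ 2 / 2)‖ ≤ ‖a‖ ^ 3 := by
    have e : φ - (1 + p * (1 - p) * a ^ 2 / 2)
        = ((p : ℝ) : ℂ) * (Complex.exp ((1 - p) * a) - (1 + (1 - p) * a + ((1 - p) * a) ^ 2 / 2))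
        + ((1 - p : ℝ) : ℂ) * (Complex.exp (-p * a) - (1 + -p * a + (-p * a) ^ 2 / 2)) := by
      rw [hφ]; push_cast; ring
    rw [e]
    refine (norm_add_le _ _).trans ?_
    rw [norm_mul, norm_mul, Complex.norm_real, Complex.norm_real, Real.norm_eq_abs,
      Real.norm_eq_abs, abs_of_pos h0, abs_of_pos (by linarith : 0 < 1 - p)]
    have q1 := mul_le_mul_of_nonneg_left r1 h0.le
    have q2 := mul_le_mul_of_nonneg_left r2 (by linarith : 0 ≤ 1 - p)
    linarith
  have hmid : (1 : ℂ) + p * (1 - p) * a ^ 2 / 2 = 1 + (-((t ^ 2 / 2 / M : ℝ) : ℂ)) := by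
    have : p * (1 - p) * (t ^ 2 / σ ^ 2) / 2 = t ^ 2 / 2 / M := by
      rw [hσ2]
      have : 1 - p ≠ 0 := by linarith
      field_simp
    rw [ha2, ← this]; push_cast; ring
  have hbn : ‖(-((t ^ 2 / 2 / M : ℝ) : ℂ))‖ = t ^ 2 / 2 / M := by
    rw [norm_neg, Complex.norm_real, Real.norm_eq_abs, abs_of_nonneg (by positivity)]
  have hbr := norm_exp_sub_le' (x := -((t ^ 2 / 2 / M : ℝ) : ℂ)) (by
    rw [hbn, div_le_one hM']; exact ht')
  rw [hbn, ← hb] at hbr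
  rw [hmid] at hφr
  have htri : ‖φ - b‖ ≤ ‖a‖ ^ 3 + (t ^ 2 / 2 / M) ^ 2 := by
    have e : φ - b = (φ - (1 + (-((t ^ 2 / 2 / M : ℝ) : ℂ))))
        - (b - (1 + (-((t ^ 2 / 2 / M : ℝ) : ℂ)))) := by ring
    rw [e]
    exact (norm_sub_le _ _).trans (add_le_add hφr hbr)
  calc (M : ℝ) * ‖φ - b‖ ≤ M * ((|t| / τ) ^ 3 + (t ^ 2 / 2 / M) ^ 2) := by
        refine mul_le_mul_of_nonneg_left (htri.trans ?_) hM'.le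
        gcongr
    _ = _ := by
        have : (M : ℝ) = τ ^ 2 / κ := by rw [hτ2]; field_simp
        rw [mul_add]
        congr 1
        · rw [this]; field_simp
        · field_simp

lemma stdNormalCDF_eq (x : ℝ) :
    stdNormalCDF x = (ProbabilityTheory.gaussianReal 0 1).real (Set.Iic x) := by
  rw [Measure.real, ProbabilityTheory.gaussianReal_apply_eq_integral _ one_ne_zero,
    ENNReal.toReal_ofReal, stdNormalCDF]
  · refine integral_congr_ae (Eventually.of_forall fun t => ?_)
    simp [ProbabilityTheory.gaussianPDFReal]
    ring
  · exact integral_nonneg fun t => ProbabilityTheory.gaussianPDFReal_nonneg _ _ _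

/-- The central limit theorem for a triangular array of binomial variables, obtained from Lévy's
continuity theorem. -/
lemma tendsto_binCDF {κ : ℝ} (hκ : 0 < κ) (q : ℕ → ℝ) (M : ℕ → ℕ)
    (hq : ∀ s, 0 < q s ∧ q s < 1) (hqκ : ∀ᶠ s in atTop, κ ≤ q s * (1 - q s))
    (hM : Tendsto M atTop atTop) (x : ℝ) :
    Tendsto (fun s => binCDF (M s) (q s) x) atTop (nhds (stdNormalCDF x)) := by
  let μ : ℕ → ProbabilityMeasure ℝ := fun s =>
    ⟨binLaw (M s) (q s), isProbabilityMeasure_binLaw (hq s).1.le (hq s).2.le (M s)⟩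
  let μ₀ : ProbabilityMeasure ℝ := ⟨ProbabilityTheory.gaussianReal 0 1, inferInstance⟩
  have hMr : Tendsto (fun s => (M s : ℝ)) atTop atTop := tendsto_natCast_atTop_atTop.comp hM
  have hτ : Tendsto (fun s => Real.sqrt (M s * κ)) atTop atTop :=
    Real.tendsto_sqrt_atTop.comp (hMr.atTop_mul_const hκ)
  have hconv : Tendsto μ atTop (nhds μ₀) := by
    refine ProbabilityMeasure.tendsto_of_tendsto_charFun fun t => ?_
    rw [tendsto_iff_norm_sub_tendsto_zero]
    have hlim : Tendsto (fun s => |t| ^ 3 / (κ * Real.sqrt (M s * κ)) + (t ^ 2 / 2) ^ 2 / M s)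
        atTop (nhds 0) := by
      simpa using ((hτ.const_mul_atTop hκ).const_div_atTop (|t| ^ 3)).add
        (hMr.const_div_atTop ((t ^ 2 / 2) ^ 2))
    refine squeeze_zero' (Eventually.of_forall fun s => norm_nonneg _) ?_ hlim
    filter_upwards [hqκ, hM.eventually_gt_atTop 0, hτ.eventually_ge_atTop |t|,
      hMr.eventually_ge_atTop (t ^ 2 / 2)] with s h1 h2 h3 h4
    have hg : charFun (μ₀ : Measure ℝ) t = Complex.exp (-(t ^ 2 / 2 : ℝ)) := by
      change charFun (ProbabilityTheory.gaussianReal 0 1) t = _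
      rw [ProbabilityTheory.charFun_gaussianReal]
      congr 1
      push_cast
      simp
    rw [hg]
    exact norm_charFun_binLaw_sub_le (hq s).1 (hq s).2 hκ h1 h2 h3 h4
  have hfr : (μ₀ : Measure ℝ) (frontier (Set.Iic x)) = 0 := by
    have : NullSingletonClass (ProbabilityTheory.gaussianReal 0 1) :=
      ProbabilityTheory.nullSingletonClass_gaussianReal one_ne_zero
    rw [frontier_Iic]
    exact measure_singleton (μ := ProbabilityTheory.gaussianReal 0 1) x
  have h := ProbabilityMeasure.tendsto_measure_of_null_frontier_of_tendsto' hconv hfr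
  have h' := (ENNReal.tendsto_toReal (measure_ne_top (μ₀ : Measure ℝ) (Set.Iic x))).comp h
  rw [stdNormalCDF_eq]
  refine h'.congr fun s => ?_
  change (binLaw (M s) (q s) (Set.Iic x)).toReal = _
  rw [binLaw_Iic (hq s).1.le (hq s).2.le, ENNReal.toReal_ofReal]
  refine Finset.sum_nonneg fun m _ => ?_
  split_ifs
  · exact binW_nonneg (hq s).1.le (hq s).2.le _ m
  · exact le_rfl

/-! ### The conditional mean as a function of the number of arcs -/

lemma abs_log_one_add_sub_le {u : ℝ} (hu : |u| ≤ 1 / 2) : |Real.log (1 + u) - u| ≤ 2 * u ^ 2 := by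
  have h := Real.abs_log_sub_add_sum_range_le (x := -u) (by rw [abs_neg]; linarith) 1
  simp only [Finset.sum_range_one, zero_add, pow_one, Nat.cast_zero, div_one, sub_neg_eq_add,
    abs_neg] at h
  have e : |Real.log (1 + u) - u| = |-u + Real.log (1 + u)| := by congr 1; ring
  rw [e]
  refine h.trans ?_
  rw [div_le_iff₀ (by linarith), one_add_one_eq_two, sq_abs]
  nlinarith [sq_nonneg u]

lemma ratio_eq {m i M p : ℝ} (hp : p ≠ 0) (hM : M - i ≠ 0) :
    (m - i) / (M - i) / p = 1 + (m - M * p - i * (1 - p)) / (p * (M - i)) := by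
  field_simp
  ring

lemma ratio_sub_eq {a i M p : ℝ} (hp : p ≠ 0) (hM : M ≠ 0) (hMi : M - i ≠ 0) :
    a / (p * (M - i)) - a / (p * M) = a / (p * (M - i)) * (i / M) := by
  field_simp
  ring

set_option maxHeartbeats 800000 in
/-- If the number of arcs `m` deviates from its mean by at most `K` standard deviations, then
`μ_m/λ = ρ/pⁿ` is `exp(-β²/2 + βZ)` up to a factor `1 + O(1/n)`, where `β² = (1-p)/p` and `Z` is the
standardized number of arcs. -/
lemma log_rho_estimate {c p K : ℝ} (hc : 0 < c) (hcp : c ≤ p) (hp1 : p < 1) (hK : 0 ≤ K)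
    {n m M : ℕ} (hn : 3 ≤ n) (hM : M = n * (n - 1))
    (hz : |zScore M p m| ≤ K) (hB : 3 * (K + 1) / c / n ≤ 1 / 2) :
    |(1 - p) / p / 2 + Real.log (rho M m n / p ^ n) - zScore M p m * Real.sqrt ((1 - p) / p)|
      ≤ (2 * (3 * (K + 1) / c) ^ 2 + 2 * (3 * (K + 1) / c) + 2 * K / c) / n := by
  have hp0 : 0 < p := by linarith
  have hq0 : 0 < 1 - p := by linarith
  have hn' : (3 : ℝ) ≤ n := by exact_mod_cast hn
  have hMr : (M : ℝ) = n * (n - 1) := by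
    rw [hM, Nat.cast_mul, Nat.cast_sub (by omega)]; push_cast; ring
  have hMpos : (0 : ℝ) < M := by rw [hMr]; nlinarith
  set B := 3 * (K + 1) / c with hBdef
  have hB0 : 0 ≤ B := by positivity
  set z := zScore M p m with hzdef
  set w := Real.sqrt M with hw
  have hw0 : 0 < w := Real.sqrt_pos.2 hMpos
  have hw2 : w ^ 2 = M := Real.sq_sqrt hMpos.le
  have hwn : w ≤ n := by
    rw [hw, Real.sqrt_le_iff]; constructor <;> [positivity; (rw [hMr]; nlinarith)]
  have hwn' : (n : ℝ) - 1 ≤ w := by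
    refine Real.le_sqrt_of_sq_le ?_
    rw [hMr]; nlinarith
  set r := Real.sqrt (p * (1 - p)) with hr
  have hr0 : 0 < r := Real.sqrt_pos.2 (by positivity)
  have hr2 : r ^ 2 = p * (1 - p) := Real.sq_sqrt (by positivity)
  have hr1 : r ≤ 1 := by
    nlinarith [sq_nonneg (p - 1)]
  have hsq : Real.sqrt (M * (p * (1 - p))) = w * r := by rw [Real.sqrt_mul hMpos.le]
  have hβ : Real.sqrt ((1 - p) / p) = r / p := by
    rw [Real.sqrt_eq_iff_mul_self_eq (by positivity) (by positivity)]
    field_simp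
    rw [hr2]
  set d := (m : ℝ) - M * p with hd
  have hdz : d = z * (w * r) := by
    rw [hzdef, zScore, hsq, ← hd]; field_simp
  have hdw : |d| ≤ K * w := by
    rw [hdz, abs_mul, abs_of_pos (by positivity : 0 < w * r)]
    have : w * r ≤ w * 1 := by gcongr
    rw [mul_one] at this
    gcongr
  have hdn : |d| ≤ K * n := hdw.trans (by gcongr)
  let u : ℕ → ℝ := fun i => (d - i * (1 - p)) / (p * (M - i))
  let v : ℕ → ℝ := fun i => (d - i * (1 - p)) / (p * M)
  have hMn : (n : ℝ) ^ 2 / 3 ≤ M - n := by rw [hMr]; nlinarith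
  have hu : ∀ i ∈ range n, |u i| ≤ B / n ∧ (m - i) / (M - i : ℝ) / p = 1 + u i ∧
      |u i - v i| ≤ 2 * B / n ^ 2 := by
    intro i hi
    rw [mem_range] at hi
    have hi' : (i : ℝ) ≤ n := by exact_mod_cast hi.le
    have hi0 : (0 : ℝ) ≤ i := by positivity
    have hMi : 0 < (M : ℝ) - i := by nlinarith
    have hui : |u i| ≤ B / n := by
      have hnum : |d - i * (1 - p)| ≤ (K + 1) * n := by
        refine (abs_sub _ _).trans ?_
        rw [abs_of_nonneg (by positivity : 0 ≤ (i : ℝ) * (1 - p))]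
        nlinarith
      change |(d - i * (1 - p)) / (p * (M - i))| ≤ _
      rw [abs_div, abs_of_pos (by positivity : 0 < p * ((M : ℝ) - i))]
      calc |d - i * (1 - p)| / (p * (M - i)) ≤ (K + 1) * n / (c * (n ^ 2 / 3)) := by
            gcongr
            linarith
        _ = B / n := by rw [hBdef]; field_simp
    refine ⟨hui, ?_, ?_⟩
    · exact ratio_eq hp0.ne' hMi.ne'
    · have e : u i - v i = u i * (i / M) := ratio_sub_eq hp0.ne' hMpos.ne' hMi.ne'
      have h2 : (i : ℝ) / M ≤ 2 / n := by
        calc (i : ℝ) / M ≤ n / M := by gcongr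
          _ = 1 / (n - 1) := by
            have : (n : ℝ) - 1 ≠ 0 := by linarith
            rw [hMr]; field_simp
          _ ≤ 2 / n := by rw [div_le_div_iff₀ (by linarith) (by linarith)]; linarith
      rw [e, abs_mul, abs_of_nonneg (by positivity : 0 ≤ (i : ℝ) / M)]
      calc |u i| * (i / M) ≤ B / n * (2 / n) := by gcongr
        _ = _ := by field_simp
  have hlog : Real.log (rho M m n / p ^ n) = ∑ i ∈ range n, Real.log (1 + u i) := by
    have : rho M m n / p ^ n = ∏ i ∈ range n, (1 + u i) := by
      rw [rho, ← Finset.card_range n, ← Finset.prod_const, Finset.card_range,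
        ← Finset.prod_div_distrib]
      exact Finset.prod_congr rfl fun i hi => (hu i hi).2.1
    rw [this, Real.log_prod]
    intro i hi
    have := abs_le.1 ((hu i hi).1.trans hB)
    linarith [this.1]
  have hsumv : ∑ i ∈ range n, v i = n * d / (p * M) - (1 - p) / p / 2 := by
    have hg : (∑ i ∈ range n, (i : ℝ)) = M / 2 := by
      have := Finset.sum_range_id_mul_two n
      have h2 : (∑ i ∈ range n, (i : ℝ)) * 2 = M := by rw [hM, ← this]; push_cast; rfl
      linarith
    change ∑ i ∈ range n, (d - i * (1 - p)) / (p * M) = _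
    rw [← Finset.sum_div, Finset.sum_sub_distrib, Finset.sum_const, Finset.card_range,
      nsmul_eq_mul, ← Finset.sum_mul, hg]
    field_simp
  have herr : |∑ i ∈ range n, Real.log (1 + u i) - ∑ i ∈ range n, v i|
      ≤ (2 * B ^ 2 + 2 * B) / n := by
    rw [← Finset.sum_sub_distrib]
    refine (Finset.abs_sum_le_sum_abs _ _).trans ?_
    calc ∑ i ∈ range n, |Real.log (1 + u i) - v i|
        ≤ ∑ i ∈ range n, (2 * (B / n) ^ 2 + 2 * B / n ^ 2) := by
          refine Finset.sum_le_sum fun i hi => ?_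
          obtain ⟨h1, -, h3⟩ := hu i hi
          have h4 := abs_log_one_add_sub_le (h1.trans hB)
          have h5 : u i ^ 2 ≤ (B / n) ^ 2 := by rw [← sq_abs]; gcongr
          have h6 : |Real.log (1 + u i) - v i| ≤ |Real.log (1 + u i) - u i| + |u i - v i| :=
            abs_sub_le _ _ _
          linarith
      _ = _ := by
          rw [Finset.sum_const, Finset.card_range, nsmul_eq_mul]
          field_simp
  -- `n d/(pM)` and `Zβ = d/(p√M)` differ by a factor `n/√M = 1 + O(1/n)`
  have hmain : |n * d / (p * M) - z * (r / p)| ≤ 2 * K / c / n := by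
    have e : n * d / (p * M) - z * (r / p) = d / w / p * ((n - w) / w) := by
      have : z = d / (w * r) := by rw [hdz]; field_simp
      rw [this, ← hw2]
      field_simp
    have h1 : |d / w / p| ≤ K / c := by
      rw [abs_div, abs_div, abs_of_pos hw0, abs_of_pos hp0]
      gcongr
      rw [div_le_iff₀ hw0]; exact hdw
    have h2 : |(n - w) / w| ≤ 2 / n := by
      rw [abs_of_nonneg (div_nonneg (by linarith) hw0.le), div_le_div_iff₀ hw0 (by linarith)]
      nlinarith
    rw [e, abs_mul]
    calc |d / w / p| * |(n - w) / w| ≤ K / c * (2 / n) := by gcongr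
      _ = _ := by field_simp
  rw [hβ, hlog]
  rw [hsumv] at herr
  have key : (1 - p) / p / 2 + ∑ i ∈ range n, Real.log (1 + u i) - z * (r / p)
      = (∑ i ∈ range n, Real.log (1 + u i) - (n * d / (p * M) - (1 - p) / p / 2))
        + (n * d / (p * M) - z * (r / p)) := by ring
  rw [key, add_div]
  exact (abs_add_le _ _).trans (add_le_add herr hmain)

/-! ### Log-normality in `D(n,p)` -/

/-- On a typical digraph, with `|Z| ≤ K` and `X` within a factor `1 ± ε` of its mean in `D(n,m)`, the
normalized logarithm of `X` is within `δ` of the standardized number of arcs `Z`. -/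
lemma logCount_close {c p K ε δ β : ℝ} (hc : 0 < c) (hcp : c ≤ p) (hp1 : p < 1) (hK : 0 ≤ K)
    {s m : ℕ} (hs : 1 ≤ s) (hnm : 3 * s ≤ m) (hmM : m ≤ (arcsAll (3 * s)).card)
    (hz : |zScore (arcsAll (3 * s)).card p m| ≤ K)
    (hB : 3 * (K + 1) / c / (3 * s : ℕ) ≤ 1 / 2) (hε : ε ≤ 1 / 2)
    (hβ : β = Real.sqrt ((1 - p) / p))
    (hδ : (2 * (3 * (K + 1) / c) ^ 2 + 2 * (3 * (K + 1) / c) + 2 * K / c) / (3 * s : ℕ) + 2 * ε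
      ≤ δ * β)
    {D : Finset (Fin (3 * s) × Fin (3 * s))}
    (hD : ¬ ε < |(dirTriFactorCount (3 * s) D : ℝ) /
      ExDnm (3 * s) m (fun D' => (dirTriFactorCount (3 * s) D' : ℝ)) - 1|) :
    0 < dirTriFactorCount (3 * s) D ∧
    |Real.log (Real.exp (β ^ 2 / 2) * (dirTriFactorCount (3 * s) D : ℝ) /
      ExDnp (3 * s) p (fun D' => (dirTriFactorCount (3 * s) D' : ℝ))) / β
        - zScore (arcsAll (3 * s)).card p m| ≤ δ := by
  have hp0 : 0 < p := by linarith
  have hq0 : 0 < 1 - p := by linarith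
  have hβ0 : 0 < β := by rw [hβ]; exact Real.sqrt_pos.2 (by positivity)
  have hβ2 : β ^ 2 = (1 - p) / p := by rw [hβ]; exact Real.sq_sqrt (by positivity)
  have hest := log_rho_estimate hc hcp hp1 hK (by omega) (card_arcsAll (3 * s)) hz hB
  rw [← hβ] at hest
  rw [sum_count_eq hnm hmM, not_lt] at hD
  rw [ExDnp_eq]
  have hT : (0 : ℝ) < ((triPerms (3 * s)).card : ℝ) := by
    exact_mod_cast (triPerms_nonempty s).card_pos
  have hρ : 0 < rho (arcsAll (3 * s)).card m (3 * s) := rho_pos hnm hmM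
  set T := ((triPerms (3 * s)).card : ℝ)
  set ρ := rho (arcsAll (3 * s)).card m (3 * s)
  set z := zScore (arcsAll (3 * s)).card p m
  set X := (dirTriFactorCount (3 * s) D : ℝ) with hX
  have hlow : 1 / 2 ≤ X / (T * ρ) := by linarith [(abs_le.1 hD).1]
  have hXpos : 0 < X := by
    by_contra h
    have : X / (T * ρ) ≤ 0 := div_nonpos_of_nonpos_of_nonneg (not_lt.1 h) (by positivity)
    linarith
  refine ⟨Nat.cast_pos.1 hXpos, ?_⟩
  have hlogX : |Real.log (X / (T * ρ))| ≤ 2 * ε := by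
    have h := abs_log_one_add_sub_le (hD.trans hε)
    rw [add_sub_cancel] at h
    set u := X / (T * ρ) - 1
    have h4 : u ^ 2 ≤ |u| / 2 := by
      rw [← sq_abs]; nlinarith [abs_nonneg u]
    have h5 := abs_add_le (Real.log (X / (T * ρ)) - u) u
    rw [sub_add_cancel] at h5
    linarith
  have hexp : Real.log (Real.exp (β ^ 2 / 2) * X / (T * p ^ (3 * s)))
      = β ^ 2 / 2 + Real.log (ρ / p ^ (3 * s)) + Real.log (X / (T * ρ)) := by
    rw [← Real.log_exp (β ^ 2 / 2), Real.log_exp, ← Real.log_exp (β ^ 2 / 2),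
      ← Real.log_mul (by positivity) (by positivity), ← Real.log_mul (by positivity) (by positivity),
      Real.log_exp]
    congr 1
    field_simp
  rw [hexp, hβ2]
  have e : ((1 - p) / p / 2 + Real.log (ρ / p ^ (3 * s)) + Real.log (X / (T * ρ))) / β - z
      = (((1 - p) / p / 2 + Real.log (ρ / p ^ (3 * s)) - z * β) + Real.log (X / (T * ρ))) / β := by
    field_simp
    ring
  rw [e, abs_div, abs_of_pos hβ0, div_le_iff₀ hβ0]
  exact (abs_add_le _ _).trans ((add_le_add hest hlogX).trans hδ)

lemma continuous_stdNormalCDF : Continuous stdNormalCDF := by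
  have hInt : Integrable (fun t : ℝ => Real.exp (-(t ^ 2) / 2) / Real.sqrt (2 * Real.pi)) := by
    have h := (integrable_exp_neg_mul_sq (b := 1 / 2) (by norm_num)).div_const
      (Real.sqrt (2 * Real.pi))
    refine h.congr (Eventually.of_forall fun t => ?_)
    simp only
    congr 2
    ring
  have h : stdNormalCDF = fun x => stdNormalCDF 0 +
      ∫ t in (0 : ℝ)..x, Real.exp (-(t ^ 2) / 2) / Real.sqrt (2 * Real.pi) := by
    funext x
    rw [← intervalIntegral.integral_Iic_sub_Iic hInt.integrableOn hInt.integrableOn]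
    simp [stdNormalCDF]
  rw [h]
  exact continuous_const.add
    (intervalIntegral.continuous_primitive (fun a b => hInt.intervalIntegrable) 0)

lemma exists_tail_bound {η : ℝ} (hη : 0 < η) :
    ∃ K : ℝ, 0 ≤ K ∧ stdNormalCDF (-K) < η ∧ 1 - η < stdNormalCDF K := by
  have e : ∀ x, stdNormalCDF x = ProbabilityTheory.cdf (ProbabilityTheory.gaussianReal 0 1) x := by
    intro x; rw [stdNormalCDF_eq, ProbabilityTheory.cdf_eq_real]
  have h1 := (ProbabilityTheory.tendsto_cdf_atBot (ProbabilityTheory.gaussianReal 0 1)).comp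
    tendsto_neg_atTop_atBot
  have h2 := ProbabilityTheory.tendsto_cdf_atTop (ProbabilityTheory.gaussianReal 0 1)
  obtain ⟨K, hK0, hK1, hK2⟩ := ((eventually_ge_atTop (0 : ℝ)).and
    ((h1.eventually (gt_mem_nhds hη)).and
      (h2.eventually (lt_mem_nhds (by linarith : 1 - η < 1))))).exists
  exact ⟨K, hK0, by rw [e]; exact hK1, by rw [e]; exact hK2⟩

/-- The mixture `∑ P(Bin = m) f m` is squeezed between `P(Z ≤ x - δ)` and `P(Z ≤ x + δ)` up to
`2η` and the probability that `|Z| > K`, whenever `f m` is `η`-close to deterministic for the typical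
values of `m`. -/
lemma sandwich {M : ℕ} {p K x δ η : ℝ} (h0 : 0 ≤ p) (h1 : p ≤ 1) (hη : 0 ≤ η) (f : ℕ → ℝ)
    (f0 : ∀ m, 0 ≤ f m) (f1 : ∀ m, f m ≤ 1)
    (hlow : ∀ m ≤ M, |zScore M p m| ≤ K → zScore M p m ≤ x - δ → 1 - η ≤ f m)
    (hupp : ∀ m ≤ M, |zScore M p m| ≤ K → x + δ < zScore M p m → f m ≤ η) :
    binCDF M p (x - δ) - η - (binCDF M p (-K) + (1 - binCDF M p K))
        ≤ ∑ m ∈ range (M + 1), binW M p m * f m ∧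
    ∑ m ∈ range (M + 1), binW M p m * f m
      ≤ binCDF M p (x + δ) + η + (binCDF M p (-K) + (1 - binCDF M p K)) := by
  have hsum : ∀ y, binCDF M p y
      = ∑ m ∈ range (M + 1), binW M p m * if zScore M p m ≤ y then 1 else 0 := by
    intro y
    rw [binCDF]
    refine Finset.sum_congr rfl fun m _ => ?_
    split_ifs <;> simp
  have hη' : η = ∑ m ∈ range (M + 1), binW M p m * η := by
    rw [← Finset.sum_mul, sum_binW, one_mul]
  have h1' : (1 : ℝ) = ∑ m ∈ range (M + 1), binW M p m * 1 := by
    simp_rw [mul_one]; rw [sum_binW]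
  -- atypical values of `m` are counted by the last two indicators
  have htail : ∀ m, ¬ |zScore M p m| ≤ K →
      (1 : ℝ) ≤ (if zScore M p m ≤ -K then 1 else 0) +
        (1 - if zScore M p m ≤ K then (1 : ℝ) else 0) := by
    intro m hm
    rw [abs_le, not_and_or, not_le, not_le] at hm
    rcases hm with hm | hm
    · rw [if_pos hm.le]; split_ifs <;> norm_num
    · rw [if_neg (not_le.2 hm)]; split_ifs <;> norm_num
  have htail0 : ∀ m, (0 : ℝ) ≤ (if zScore M p m ≤ -K then 1 else 0) +
        (1 - if zScore M p m ≤ K then (1 : ℝ) else 0) := by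
    intro m; split_ifs <;> norm_num
  have e : ∑ m ∈ range (M + 1), binW M p m * ((if zScore M p m ≤ -K then 1 else 0) +
        (1 - if zScore M p m ≤ K then (1 : ℝ) else 0))
      = binCDF M p (-K) + (1 - binCDF M p K) := by
    simp_rw [mul_add, mul_sub]
    rw [Finset.sum_add_distrib, Finset.sum_sub_distrib, ← h1', ← hsum, ← hsum]
  rw [← e, hsum, hsum]
  constructor
  · nth_rewrite 1 [hη']
    rw [← Finset.sum_sub_distrib, ← Finset.sum_sub_distrib]
    refine Finset.sum_le_sum fun m hm => ?_
    rw [← mul_sub, ← mul_sub]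
    refine mul_le_mul_of_nonneg_left ?_ (binW_nonneg h0 h1 M m)
    have hmM : m ≤ M := by rw [mem_range] at hm; omega
    have hf := f0 m
    have ht0 := htail0 m
    by_cases hK : |zScore M p m| ≤ K
    · by_cases hx : zScore M p m ≤ x - δ
      · have := hlow m hmM hK hx
        rw [if_pos hx]; linarith
      · rw [if_neg hx]; linarith
    · have := htail m hK
      have h2 : (if zScore M p m ≤ x - δ then (1 : ℝ) else 0) ≤ 1 := by split_ifs <;> norm_num
      linarith
  · nth_rewrite 1 [hη']
    rw [← Finset.sum_add_distrib, ← Finset.sum_add_distrib]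
    refine Finset.sum_le_sum fun m hm => ?_
    rw [← mul_add, ← mul_add]
    refine mul_le_mul_of_nonneg_left ?_ (binW_nonneg h0 h1 M m)
    have hmM : m ≤ M := by rw [mem_range] at hm; omega
    have hf := f1 m
    have ht0 := htail0 m
    by_cases hK : |zScore M p m| ≤ K
    · by_cases hx : zScore M p m ≤ x + δ
      · rw [if_pos hx]; linarith
      · have := hupp m hmM hK (not_le.1 hx)
        rw [if_neg hx]; linarith
    · have := htail m hK
      have h2 : 0 ≤ (if zScore M p m ≤ x + δ then (1 : ℝ) else 0) := by split_ifs <;> norm_num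
      linarith

lemma le_of_abs_zScore_le {c p K : ℝ} (hc : 0 < c) (hcp : c ≤ p) (hp1 : p < 1)
    {M m : ℕ} (hM : 0 < M) (hKM : K ≤ c / 2 * Real.sqrt M) (hz : |zScore M p m| ≤ K) :
    c / 2 * M ≤ m := by
  have hM' : (0 : ℝ) < M := by exact_mod_cast hM
  have hp0 : 0 < p := by linarith
  have hq : 0 < p * (1 - p) := mul_pos hp0 (by linarith)
  set w := Real.sqrt M
  have hw : 0 < w := Real.sqrt_pos.2 hM'
  have hw2 : w * w = M := Real.mul_self_sqrt hM'.le
  have hσ0 : 0 < Real.sqrt (M * (p * (1 - p))) := Real.sqrt_pos.2 (by positivity)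
  have hσ : Real.sqrt (M * (p * (1 - p))) ≤ w := by
    refine Real.sqrt_le_sqrt (mul_le_of_le_one_right hM'.le ?_)
    nlinarith
  have h := (abs_le.1 hz).1
  rw [zScore, le_div_iff₀ hσ0] at h
  have h1 : K * Real.sqrt (M * (p * (1 - p))) ≤ c / 2 * w * w := by gcongr
  rw [mul_assoc, hw2] at h1
  have h2 : c * M ≤ M * p := by nlinarith
  linarith

lemma tendsto_PrDnp {c c' : ℝ} (hc : 0 < c) (hc' : c' < 1) (q β : ℕ → ℝ)
    (hq : ∀ s, 0 < q s ∧ q s < 1) (hβ : ∀ s, β s = Real.sqrt ((1 - q s) / q s))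
    (hcq : ∀ᶠ s in atTop, c ≤ q s) (hcq' : ∀ᶠ s in atTop, q s ≤ c') (x : ℝ) :
    Tendsto (fun s : ℕ => PrDnp (3 * s) (q s) fun D =>
        0 < dirTriFactorCount (3 * s) D ∧
        Real.log (Real.exp (β s ^ 2 / 2) * (dirTriFactorCount (3 * s) D : ℝ) /
          ExDnp (3 * s) (q s) (fun D' => (dirTriFactorCount (3 * s) D' : ℝ))) / β s ≤ x)
      atTop (nhds (stdNormalCDF x)) := by
  rw [Metric.tendsto_atTop']
  change ∀ θ > 0, _
  intro θ hθ
  set η := θ / 8 with hηdef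
  have hη : 0 < η := by positivity
  -- the constants `δ`, `K`, `ε`
  obtain ⟨δ₀, hδ₀, hcont⟩ := Metric.continuous_iff.1 continuous_stdNormalCDF x η hη
  set δ := δ₀ / 2 with hδdef
  have hδ : 0 < δ := by positivity
  have hcl : |stdNormalCDF (x - δ) - stdNormalCDF x| < η := by
    refine hcont (x - δ) ?_
    rw [Real.dist_eq, sub_sub_cancel_left, abs_neg, abs_of_pos hδ]; linarith
  have hcu : |stdNormalCDF (x + δ) - stdNormalCDF x| < η := by
    refine hcont (x + δ) ?_
    rw [Real.dist_eq, add_sub_cancel_left, abs_of_pos hδ]; linarith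
  obtain ⟨K, hK, hKl, hKu⟩ := exists_tail_bound hη
  have hb0 : 0 < Real.sqrt (1 - c') := Real.sqrt_pos.2 (by linarith)
  set b := Real.sqrt (1 - c') with hb
  set ε := min (1 / 2) (δ * b / 4) with hεdef
  have hε : 0 < ε := lt_min (by norm_num) (by positivity)
  have hε2 : ε ≤ 1 / 2 := min_le_left _ _
  have hεδ : 2 * ε ≤ δ * b / 2 := by
    have := min_le_right (1 / 2) (δ * b / 4)
    linarith
  -- everything that has to be large
  set M : ℕ → ℕ := fun s => (arcsAll (3 * s)).card with hMdef
  have hs : Tendsto (fun s : ℕ => s) atTop atTop := tendsto_id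
  have hMlow : ∀ s, s ≤ M s := by
    intro s
    rw [hMdef]
    simp only [card_arcsAll]
    rcases Nat.eq_zero_or_pos s with rfl | h
    · simp
    · calc s ≤ 3 * s * 1 := by omega
        _ ≤ 3 * s * (3 * s - 1) := Nat.mul_le_mul_left _ (by omega)
  have hM : Tendsto M atTop atTop := tendsto_atTop_mono hMlow hs
  have hMr : Tendsto (fun s => (M s : ℝ)) atTop atTop := tendsto_natCast_atTop_atTop.comp hM
  have hw : Tendsto (fun s => c / 2 * Real.sqrt (M s)) atTop atTop :=
    (Real.tendsto_sqrt_atTop.comp hMr).const_mul_atTop (by positivity)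
  have h3 : Tendsto (fun s : ℕ => ((3 * s : ℕ) : ℝ)) atTop atTop :=
    tendsto_natCast_atTop_atTop.comp (tendsto_atTop_mono (fun s => by omega) hs)
  have hE1 : Tendsto (fun s : ℕ => 3 * (K + 1) / c / ((3 * s : ℕ) : ℝ)) atTop (nhds 0) :=
    h3.const_div_atTop _
  have hE2 : Tendsto (fun s : ℕ => (2 * (3 * (K + 1) / c) ^ 2 + 2 * (3 * (K + 1) / c) + 2 * K / c)
      / ((3 * s : ℕ) : ℝ)) atTop (nhds 0) := h3.const_div_atTop _
  have hmom : Tendsto (fun s => (momentBound (c / 2) s - 1) / ε ^ 2) atTop (nhds 0) := by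
    simpa using ((tendsto_momentBound (half_pos hc)).sub_const 1).div_const (ε ^ 2)
  have hqκ : ∀ᶠ s in atTop, c * (1 - c') ≤ q s * (1 - q s) := by
    filter_upwards [hcq, hcq'] with s h1 h2
    have := hq s
    exact mul_le_mul h1 (by linarith) (by linarith) (by linarith)
  have hclt := fun y => tendsto_binCDF (mul_pos hc (by linarith : 0 < 1 - c')) q M hq hqκ hM y
  have hclt' : ∀ y, ∀ᶠ s in atTop, |binCDF (M s) (q s) y - stdNormalCDF y| < η := by
    intro y
    exact (Metric.tendsto_nhds.1 (hclt y)) η hη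
  have hev : ∀ᶠ s in atTop, dist (PrDnp (3 * s) (q s) fun D =>
        0 < dirTriFactorCount (3 * s) D ∧
        Real.log (Real.exp (β s ^ 2 / 2) * (dirTriFactorCount (3 * s) D : ℝ) /
          ExDnp (3 * s) (q s) (fun D' => (dirTriFactorCount (3 * s) D' : ℝ))) / β s ≤ x)
        (stdNormalCDF x) < θ := by
    filter_upwards [hcq, hcq', eventually_four_le (half_pos hc), hM.eventually_gt_atTop 0,
      hw.eventually_ge_atTop K, hE1.eventually (gt_mem_nhds (by norm_num : (0 : ℝ) < 1 / 2)),
      hE2.eventually (gt_mem_nhds (by positivity : 0 < δ * b / 2)),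
      hmom.eventually (gt_mem_nhds hη), hclt' (x - δ), hclt' (x + δ), hclt' (-K), hclt' K]
      with s g1 g2 g3 g4 g5 g6 g7 g8 g9 g10 g11 g12
    have hq1 := hq s
    have hbβ : b ≤ β s := by
      rw [hb, hβ s]
      refine Real.sqrt_le_sqrt ?_
      rw [le_div_iff₀ hq1.1]
      nlinarith
    -- for typical `m`, the count is close to its mean in `D(3s, m)`
    have htyp : ∀ m ≤ M s, |zScore (M s) (q s) m| ≤ K → 3 * s ≤ m ∧
        PrDnm (3 * s) m (fun D => ε < |(dirTriFactorCount (3 * s) D : ℝ) /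
          ExDnm (3 * s) m (fun D' => (dirTriFactorCount (3 * s) D' : ℝ)) - 1|) ≤ η := by
      intro m hm hz
      have hcm := le_of_abs_zScore_le hc g1 hq1.2 g4 g5 hz
      have h1 := (second_moment_le (half_pos hc) g3.1 g3.2 hm hcm).1
      exact ⟨by omega, (concentration_Dnm (half_pos hc) g3.1 g3.2 hm hcm hε).trans g8.le⟩
    have hclose : ∀ m ≤ M s, |zScore (M s) (q s) m| ≤ K → ∀ D,
        ¬ ε < |(dirTriFactorCount (3 * s) D : ℝ) /
          ExDnm (3 * s) m (fun D' => (dirTriFactorCount (3 * s) D' : ℝ)) - 1| → _ :=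
      fun m hm hz D hD => logCount_close (δ := δ) hc g1 hq1.2 hK g3.1 (htyp m hm hz).1 hm hz g6.le
        hε2 (hβ s) (by nlinarith) hD
    rw [PrDnp_eq]
    have hsand := sandwich (M := M s) (p := q s) (K := K) (x := x) (δ := δ) hq1.1.le hq1.2.le hη.le
      (fun m => PrDnm (3 * s) m fun D => 0 < dirTriFactorCount (3 * s) D ∧
        Real.log (Real.exp (β s ^ 2 / 2) * (dirTriFactorCount (3 * s) D : ℝ) /
          ExDnp (3 * s) (q s) (fun D' => (dirTriFactorCount (3 * s) D' : ℝ))) / β s ≤ x)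
      (fun m => PrDnm_nonneg _ _ _) (fun m => PrDnm_le_one _ _ _)
      (by
        intro m hm hz hzx
        rw [PrDnm_compl hm]
        refine sub_le_sub_left ((PrDnm_mono (3 * s) m ?_).trans (htyp m hm hz).2) 1
        intro D hD
        by_contra hcon
        obtain ⟨c1, c2⟩ := hclose m hm hz D hcon
        exact hD ⟨c1, by linarith [(abs_le.1 c2).2]⟩)
      (by
        intro m hm hz hzx
        refine (PrDnm_mono (3 * s) m ?_).trans (htyp m hm hz).2
        intro D hD
        by_contra hcon
        obtain ⟨c1, c2⟩ := hclose m hm hz D hcon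
        linarith [(abs_le.1 c2).1, hD.2])
    rw [Real.dist_eq, abs_lt]
    rw [abs_lt] at hcl hcu g9 g10 g11 g12
    obtain ⟨s1, s2⟩ := hsand
    constructor
    · refine lt_of_lt_of_le ?_ (sub_le_sub_right s1 _)
      linarith [hcl.1, g9.1, g11.2, g12.1]
    · refine lt_of_le_of_lt (sub_le_sub_right s2 _) ?_
      linarith [hcu.2, g10.2, g11.2, g12.1]
  obtain ⟨N, hN⟩ := eventually_atTop.1 hev
  exact ⟨N, fun s hs => hN s hs.le⟩

/-- **Theorem 3.8 (disjoint directed triangles).**  For `n ≡ 0 (mod 3)`, if `m = p·2N` and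
`liminf p > 0`, then the number `X_n` of directed triangle factors contained in the random
digraph satisfies `X_n/μ_n → 1` in probability in `D(n,m)`; if moreover `limsup p < 1`, then
`ln(e^{β_n²/2}X_n/λ_n)/β_n →d 𝒩(0,1)` in `D(n,p)`, where `β_n = √((1-p)/p)`.
(All limits are along `n → ∞` through multiples of `3`.) -/
theorem directed_triangle_factors
    (p : ℕ → ℝ) (m : ℕ → ℕ) (β : ℕ → ℝ)
    (hp : ∀ n : ℕ, 3 ∣ n → 0 < p n ∧ p n < 1)
    (hm : ∀ n : ℕ, 3 ∣ n → (m n : ℝ) = p n * (2 * (Nn n : ℝ)))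
    (hliminf : ∃ c : ℝ, 0 < c ∧ ∀ᶠ n : ℕ in atTop ⊓ Filter.principal {n : ℕ | 3 ∣ n}, c ≤ p n)
    (hβ : ∀ n : ℕ, β n = Real.sqrt ((1 - p n) / p n)) :
    -- concentration in `D(n,m)`
    ((∀ ε : ℝ, 0 < ε →
      Tendsto (fun n : ℕ => PrDnm n (m n) fun D =>
          ε < |(dirTriFactorCount n D : ℝ) /
            ExDnm n (m n) (fun D' => (dirTriFactorCount n D' : ℝ)) - 1|)
        (atTop ⊓ Filter.principal {n : ℕ | 3 ∣ n}) (nhds 0)) ∧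
    -- log-normality in `D(n,p)`, assuming `limsup p < 1`
    ((∃ c : ℝ, c < 1 ∧ ∀ᶠ n : ℕ in atTop ⊓ Filter.principal {n : ℕ | 3 ∣ n}, p n ≤ c) →
      ∀ x : ℝ,
        Tendsto (fun n : ℕ => PrDnp n (p n) fun D =>
            0 < dirTriFactorCount n D ∧
            Real.log (Real.exp (β n ^ 2 / 2) * (dirTriFactorCount n D : ℝ) /
              ExDnp n (p n) (fun D' => (dirTriFactorCount n D' : ℝ))) / β n ≤ x)
          (atTop ⊓ Filter.principal {n : ℕ | 3 ∣ n}) (nhds (stdNormalCDF x)))) := by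
  simp only [filter_three_eq] at hliminf ⊢
  obtain ⟨c, hc, hcp⟩ := hliminf
  have hcp' : ∀ᶠ s in atTop, c ≤ p (3 * s) := Filter.eventually_map.1 hcp
  have hp' := fun s => hp (3 * s) ⟨s, rfl⟩
  refine ⟨fun ε hε => Filter.tendsto_map'_iff.2 (tendsto_PrDnm hc (fun s => p (3 * s))
    (fun s => m (3 * s)) (fun s => (hp' s).2) (fun s => hm _ ⟨s, rfl⟩) hcp' hε), ?_⟩
  rintro ⟨d, hd, hcd⟩ x
  exact Filter.tendsto_map'_iff.2 (tendsto_PrDnp hc hd (fun s => p (3 * s)) (fun s => β (3 * s))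
    hp' (fun s => hβ _) hcp' (Filter.eventually_map.1 hcd) x)
end
end

section
/- Let n ≥ 4 and let C be a Hamiltonian cycle of the complete graph K_n on [n] (a connected 2-regular graph on all n vertices). For every integer j with 1 ≤ j ≤ n−3, the number of Hamiltonian cycles H on [n] with |E(H) ∩ E(C)| ≥ j is at most C(n,j) · 2^j · (n−j−1)!/2, and in particular is less than n! · 2^j / j!. -/
/-!
Orienting Hamiltonian cycles reduces the problem to counting permutations of `[n]` that are a
single `n`-cycle (full cycles): since `n ≥ 3`, a full cycle `σ` differs from `σ⁻¹`, and the two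
have the same edge set, so twice the number of Hamiltonian cycles in question is at most the number
of full cycles `σ` sharing at least `j` edges with `C`.

Let `τ` be a full cycle with edge set `C`. If `σ` shares at least `j` edges with `C`, there is a
`j`-set `T` of vertices `v` with `{v, τ v}` an edge of `σ`; let `U ⊆ T` be the set of those `v` with
`σ v = τ v`, so that `σ (τ v) = v` for `v ∈ T \ U`. There are `C(n,j) * 2^j` pairs `(T, U)`, and each
prescribes `σ` at `j` distinct points (`card_fiber_le`).

The number of full cycles with prescribed values on a set `A` of `j < n` points is at most
`(n-j-1)!` (`card_prescribed_le`), by induction on `n-j-1`: for a point `a ∉ A`, the value `σ a`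
avoids the `j` prescribed values, and it also avoids the start of the prescribed path that ends
at `a`, for otherwise the cycle would close up inside `A ∪ {a}` (`exists_forbidden`).
So there are at most `n-j-1` choices for `σ a`.
-/

open Finset Filter
open scoped Classical

noncomputable section

/-- The edge set of the complete graph on the vertex set `[n] = Fin n`. -/
def edgesAll (n : ℕ) : Finset (Sym2 (Fin n)) :=
  Finset.univ.filter fun e => ¬ e.IsDiag

/-- `H` is (the edge set of) a Hamiltonian cycle on `[n]`: there is a cyclic permutation `σ`
of the vertices whose edges `{v, σ v}` are exactly `H`. -/
def IsHamCycle (n : ℕ) (H : Finset (Sym2 (Fin n))) : Prop :=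
  ∃ σ : Equiv.Perm (Fin n), σ.IsCycle ∧ σ.support = Finset.univ ∧
    H = Finset.univ.image fun v => s(v, σ v)

/-! ### Full cycles with prescribed values -/

/-- `σ` is a single cycle through all the points of `V`. -/
def FullCycle {V : Type*} [Fintype V] [DecidableEq V] (σ : Equiv.Perm V) : Prop :=
  σ.IsCycle ∧ σ.support = Finset.univ

section FullCycles

variable {V : Type*} [Fintype V] [DecidableEq V]

lemma FullCycle.inv {σ : Equiv.Perm V} (h : FullCycle σ) : FullCycle σ⁻¹ :=
  ⟨h.1.inv, by rw [Equiv.Perm.support_inv]; exact h.2⟩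

lemma FullCycle.apply_ne {σ : Equiv.Perm V} (h : FullCycle σ) (x : V) : σ x ≠ x := by
  have : x ∈ σ.support := by rw [h.2]; exact Finset.mem_univ x
  simpa using this

lemma FullCycle.eq_univ_of_closed {σ : Equiv.Perm V} (h : FullCycle σ) (R : Set V) {x : V}
    (hx : x ∈ R) (hR : ∀ y ∈ R, σ y ∈ R) (y : V) : y ∈ R := by
  obtain ⟨i, rfl⟩ := h.1.exists_pow_eq (h.apply_ne x) (h.apply_ne y)
  induction i with
  | zero => simpa using hx
  | succ i ih => rw [pow_succ', Equiv.Perm.mul_apply]; exact hR _ ih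

/-- If a full cycle `σ₀` is prescribed on `A`, and `A` together with `a ∉ A` is not everything,
then there is a point `c`, outside the prescribed values, to which no full cycle agreeing with
`σ₀` on `A` can send `a`: the start of the path of prescribed arcs that ends at `a`. -/
lemma exists_forbidden {σ₀ : Equiv.Perm V} (h₀ : FullCycle σ₀) (A : Finset V) (a z : V)
    (hzA : z ∉ A) (hza : z ≠ a) :
    ∃ c, σ₀⁻¹ c ∉ A ∧ ∀ σ : Equiv.Perm V, FullCycle σ → (∀ x ∈ A, σ x = σ₀ x) → σ a ≠ c := by
  -- `Q` is the vertex set of the path of prescribed arcs that ends at `a`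
  let Q : Set V := {x | ∃ k : ℕ, (σ₀ ^ k) x = a ∧ ∀ i < k, (σ₀ ^ i) x ∈ A}
  have hzQ : z ∉ Q := by
    rintro ⟨k, hk, hA⟩
    cases k with
    | zero => exact hza (by simpa using hk)
    | succ k => exact hzA (by simpa using hA 0 (by omega))
  have haQ : a ∈ Q := ⟨0, by simp, by simp⟩
  obtain ⟨c, hcQ, hc⟩ : ∃ c ∈ Q, σ₀⁻¹ c ∉ Q := by
    by_contra! hcon
    exact hzQ (h₀.inv.eq_univ_of_closed Q haQ hcon z)
  obtain ⟨k, hk, hA⟩ := hcQ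
  refine ⟨c, fun hcA => hc ⟨k + 1, ?_, ?_⟩, ?_⟩
  · rw [pow_succ, Equiv.Perm.mul_apply, show σ₀ (σ₀⁻¹ c) = c from σ₀.apply_symm_apply c, hk]
  · intro i hi
    cases i with
    | zero => simpa using hcA
    | succ i =>
      rw [pow_succ, Equiv.Perm.mul_apply, show σ₀ (σ₀⁻¹ c) = c from σ₀.apply_symm_apply c]
      exact hA i (by omega)
  · intro σ hσ hag hac
    -- the path from `c` to `a` is closed under `σ`, although it misses `z`
    obtain ⟨i, hi, rfl⟩ := hσ.eq_univ_of_closed {y | ∃ i ≤ k, (σ₀ ^ i) c = y}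
      (x := c) ⟨0, by omega, by simp⟩ (by
        rintro y ⟨i, hi, rfl⟩
        rcases hi.lt_or_eq with hlt | rfl
        · refine ⟨i + 1, hlt, ?_⟩
          rw [hag _ (hA i hlt), pow_succ', Equiv.Perm.mul_apply]
        · exact ⟨0, by omega, by rw [hk, hac]; simp⟩) z
    rcases hi.lt_or_eq with hlt | rfl
    · exact hzA (hA i hlt)
    · exact hza hk

/-- At most `m!` full cycles take prescribed values on all but `m + 1` of the points. -/
lemma card_prescribed_le (m : ℕ) : ∀ (A : Finset V) (f : V → V),
    A.card + m + 1 = Fintype.card V →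
    ((Finset.univ : Finset (Equiv.Perm V)).filter
      fun σ => FullCycle σ ∧ ∀ a ∈ A, σ a = f a).card ≤ m.factorial := by
  induction m with
  | zero =>
    intro A f hA
    obtain ⟨a, ha⟩ : ∃ a, Aᶜ = {a} := by
      rw [← Finset.card_eq_one, Finset.card_compl]; omega
    have hmem : ∀ x, x ≠ a → x ∈ A := by
      intro x hx
      by_contra hxA
      have : x ∈ Aᶜ := by simpa using hxA
      rw [ha] at this
      exact hx (by simpa using this)
    rw [Nat.factorial_zero, Finset.card_le_one]
    intro σ hσ σ' hσ'
    simp only [Finset.mem_filter, Finset.mem_univ, true_and] at hσ hσ'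
    have hag : ∀ x, x ≠ a → σ x = σ' x := fun x hx => by
      rw [hσ.2 x (hmem x hx), hσ'.2 x (hmem x hx)]
    ext x
    by_cases hx : x = a
    · subst hx
      obtain ⟨y, hy⟩ := σ.surjective (σ' x)
      by_cases hyx : y = x
      · rw [← hy, hyx]
      · rw [hag y hyx] at hy
        exact absurd (σ'.injective hy) hyx
    · exact hag x hx
  | succ m ih =>
    intro A f hA
    rcases Finset.eq_empty_or_nonempty ((Finset.univ : Finset (Equiv.Perm V)).filter
      fun σ => FullCycle σ ∧ ∀ a ∈ A, σ a = f a) with hemp | ⟨σ₀, h₀⟩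
    · rw [hemp]; simp
    simp only [Finset.mem_filter, Finset.mem_univ, true_and] at h₀
    obtain ⟨a, ha, z, hz, haz⟩ : ∃ a ∈ Aᶜ, ∃ z ∈ Aᶜ, a ≠ z := by
      rw [← Finset.one_lt_card, Finset.card_compl]; omega
    rw [Finset.mem_compl] at ha hz
    obtain ⟨c, hcA, hc⟩ := exists_forbidden h₀.1 A a z hz haz.symm
    have hmaps : ∀ σ ∈ (Finset.univ : Finset (Equiv.Perm V)).filter
        (fun σ => FullCycle σ ∧ ∀ a ∈ A, σ a = f a), σ a ∈ ((A.image σ₀)ᶜ).erase c := by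
      intro σ hσ
      simp only [Finset.mem_filter, Finset.mem_univ, true_and] at hσ
      have hag : ∀ x ∈ A, σ x = σ₀ x := fun x hx => by rw [hσ.2 x hx, h₀.2 x hx]
      rw [Finset.mem_erase, Finset.mem_compl, Finset.mem_image]
      refine ⟨hc σ hσ.1 hag, ?_⟩
      rintro ⟨x, hx, hxa⟩
      rw [← hag x hx] at hxa
      exact ha (σ.injective hxa ▸ hx)
    have hcard : (((A.image σ₀)ᶜ).erase c).card = m + 1 := by
      rw [Finset.card_erase_of_mem, Finset.card_compl,
        Finset.card_image_of_injective _ σ₀.injective]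
      · omega
      · rw [Finset.mem_compl, Finset.mem_image]
        rintro ⟨x, hx, rfl⟩
        exact hcA (by simpa using hx)
    rw [Nat.factorial_succ, ← hcard, mul_comm]
    refine Finset.card_le_mul_card_image_of_maps_to hmaps _ ?_
    intro b _
    refine le_trans (Finset.card_le_card ?_)
      (ih (insert a A) (Function.update f a b) (by rw [Finset.card_insert_of_notMem ha]; omega))
    intro σ hσ
    simp only [Finset.mem_filter, Finset.mem_univ, true_and] at hσ ⊢
    refine ⟨hσ.1.1, fun x hx => ?_⟩
    by_cases hxa : x = a
    · subst hxa; simpa using hσ.2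
    · rw [Function.update_of_ne hxa]
      exact hσ.1.2 x (Finset.mem_of_mem_insert_of_ne hx hxa)

/-! ### Full cycles sharing edges with a given one -/

lemma FullCycle.apply_apply_ne {σ : Equiv.Perm V} (h : FullCycle σ) (hV : 3 ≤ Fintype.card V)
    (x : V) : σ (σ x) ≠ x := by
  intro hx
  have hsub : (Finset.univ : Finset V) ⊆ {x, σ x} := by
    intro y _
    have := h.eq_univ_of_closed ({x, σ x} : Set V) (x := x) (by simp) (by
      rintro y (rfl | rfl)
      · simp
      · simp [hx]) y
    simpa using this
  have h1 := Finset.card_le_card hsub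
  have h2 : ({x, σ x} : Finset V).card ≤ 2 := Finset.card_le_two
  rw [Finset.card_univ] at h1
  omega

/-- With `j = T.card` and `m = n-j-1`, at most `m!` full cycles traverse the edges `{v, τ v}`, `v ∈ T`, with the given
orientation: along `τ` for `v ∈ U` and against `τ` for the others. -/
lemma card_fiber_le {τ : Equiv.Perm V} (hτ : FullCycle τ) (hV : 3 ≤ Fintype.card V)
    (T U : Finset V) (hU : U ⊆ T) (m : ℕ) (hm : T.card + m + 1 = Fintype.card V) :
    ((Finset.univ : Finset (Equiv.Perm V)).filter fun σ => FullCycle σ ∧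
      (∀ v ∈ U, σ v = τ v) ∧ ∀ v ∈ T \ U, σ (τ v) = v).card ≤ m.factorial := by
  rcases Finset.eq_empty_or_nonempty ((Finset.univ : Finset (Equiv.Perm V)).filter
    fun σ => FullCycle σ ∧ (∀ v ∈ U, σ v = τ v) ∧ ∀ v ∈ T \ U, σ (τ v) = v) with hemp | ⟨σ₀, h₀⟩
  · rw [hemp]; simp
  simp only [Finset.mem_filter, Finset.mem_univ, true_and] at h₀
  have hdisj : Disjoint U ((T \ U).image τ) := by
    rw [Finset.disjoint_left]
    intro v hv hv'
    obtain ⟨w, hw, rfl⟩ := Finset.mem_image.1 hv'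
    have h1 := h₀.2.1 _ hv
    rw [h₀.2.2 w hw] at h1
    exact hτ.apply_apply_ne hV w h1.symm
  have hcard : (U ∪ (T \ U).image τ).card = T.card := by
    rw [Finset.card_union_of_disjoint hdisj, Finset.card_image_of_injective _ τ.injective,
      Finset.card_sdiff_of_subset hU]
    have := Finset.card_le_card hU
    omega
  refine le_trans (Finset.card_le_card ?_)
    (card_prescribed_le m (U ∪ (T \ U).image τ) σ₀ (by rw [hcard]; exact hm))
  intro σ hσ
  simp only [Finset.mem_filter, Finset.mem_univ, true_and] at hσ ⊢
  refine ⟨hσ.1, fun x hx => ?_⟩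
  rcases Finset.mem_union.1 hx with hx | hx
  · rw [hσ.2.1 x hx, h₀.2.1 x hx]
  · obtain ⟨w, hw, rfl⟩ := Finset.mem_image.1 hx
    rw [hσ.2.2 w hw, h₀.2.2 w hw]

/-- The edge set of the (undirected) cycle traversed by `σ`. -/
def cycleEdges (σ : Equiv.Perm V) : Finset (Sym2 V) :=
  Finset.univ.image fun v => s(v, σ v)

lemma cycleEdges_inv (σ : Equiv.Perm V) : cycleEdges σ⁻¹ = cycleEdges σ := by
  ext e
  simp only [cycleEdges, Finset.mem_image, Finset.mem_univ, true_and]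
  constructor
  · rintro ⟨v, rfl⟩
    exact ⟨σ⁻¹ v, by rw [show σ (σ⁻¹ v) = v from σ.apply_symm_apply v, Sym2.eq_swap]⟩
  · rintro ⟨v, rfl⟩
    exact ⟨σ v, by rw [show σ⁻¹ (σ v) = v from σ.symm_apply_apply v, Sym2.eq_swap]⟩

/-- The union bound over the pairs `(T, U)`. -/
lemma card_directed_le {τ : Equiv.Perm V} (hτ : FullCycle τ) (hV : 3 ≤ Fintype.card V)
    (j m : ℕ) (hm : j + m + 1 = Fintype.card V) :
    ((Finset.univ : Finset (Equiv.Perm V)).filter fun σ => FullCycle σ ∧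
      j ≤ (cycleEdges σ ∩ cycleEdges τ).card).card ≤
    (Fintype.card V).choose j * 2 ^ j * m.factorial := by
  let P := (Finset.powersetCard j (Finset.univ : Finset V)).sigma fun T => T.powerset
  have hP : P.card = (Fintype.card V).choose j * 2 ^ j := by
    rw [Finset.card_sigma, Finset.sum_congr rfl (g := fun _ => 2 ^ j)]
    · simp
    · intro T hT
      rw [Finset.card_powerset, (Finset.mem_powersetCard.1 hT).2]
  rw [← hP]
  refine le_trans (Finset.card_le_card (t := P.biUnion fun p =>
    (Finset.univ : Finset (Equiv.Perm V)).filter fun σ => FullCycle σ ∧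
      (∀ v ∈ p.2, σ v = τ v) ∧ ∀ v ∈ p.1 \ p.2, σ (τ v) = v) ?_)
    (Finset.card_biUnion_le_card_mul _ _ _ ?_)
  · intro σ hσ
    simp only [Finset.mem_filter, Finset.mem_univ, true_and] at hσ
    obtain ⟨hσ, hj⟩ := hσ
    let W := Finset.univ.filter fun v => s(v, τ v) ∈ cycleEdges σ
    have hW : cycleEdges σ ∩ cycleEdges τ ⊆ W.image fun v => s(v, τ v) := by
      intro e he
      obtain ⟨he1, he2⟩ := Finset.mem_inter.1 he
      obtain ⟨v, -, rfl⟩ := Finset.mem_image.1 he2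
      exact Finset.mem_image.2 ⟨v, by simpa [W] using he1, rfl⟩
    obtain ⟨T, hTW, hT⟩ := Finset.exists_subset_card_eq
      (hj.trans ((Finset.card_le_card hW).trans Finset.card_image_le))
    refine Finset.mem_biUnion.2 ⟨⟨T, T.filter fun v => σ v = τ v⟩, ?_, ?_⟩
    · simp [P, hT]
    · simp only [Finset.mem_filter, Finset.mem_univ, true_and, Finset.mem_sdiff]
      refine ⟨hσ, fun v hv => hv.2, ?_⟩
      rintro v ⟨hvT, hv⟩
      have hv' : σ v ≠ τ v := fun h => hv ⟨hvT, h⟩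
      have hvW := hTW hvT
      simp only [W, cycleEdges, Finset.mem_filter, Finset.mem_image, Finset.mem_univ,
        true_and] at hvW
      obtain ⟨w, hw⟩ := hvW
      rcases Sym2.eq_iff.1 hw with ⟨rfl, h⟩ | ⟨rfl, h⟩
      · exact absurd h hv'
      · exact h
  · rintro ⟨T, U⟩ hp
    simp only [P, Finset.mem_sigma, Finset.mem_powersetCard, Finset.mem_powerset] at hp
    exact card_fiber_le hτ hV T U hp.2 m (by rw [hp.1.2]; exact hm)

end FullCycles

/-! ### Undirected Hamiltonian cycles -/

/-- **Overlap bound for Hamilton cycles.**  For `n ≥ 4`, a Hamiltonian cycle `C` on `[n]`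
and `1 ≤ j ≤ n-3`, the number of Hamiltonian cycles `H` with `|E(H) ∩ E(C)| ≥ j` is at most
`C(n,j)·2^j·(n-j-1)!/2`, and in particular is less than `n!·2^j/j!`. -/
theorem ham_overlap_bound (n : ℕ) (hn : 4 ≤ n)
    (C : Finset (Sym2 (Fin n))) (hC : IsHamCycle n C)
    (j : ℕ) (hj1 : 1 ≤ j) (hj2 : j ≤ n - 3) :
    (((((edgesAll n).powerset.filter (IsHamCycle n)).filter
        fun H => j ≤ (H ∩ C).card).card : ℝ) ≤
      (n.choose j : ℝ) * 2 ^ j * ((n - j - 1).factorial : ℝ) / 2) ∧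
    (((((edgesAll n).powerset.filter (IsHamCycle n)).filter
        fun H => j ≤ (H ∩ C).card).card : ℝ) <
      (n.factorial : ℝ) * 2 ^ j / (j.factorial : ℝ)) := by
  obtain ⟨τ, hτ1, hτ2, hτC⟩ := hC
  have hτ : FullCycle τ := ⟨hτ1, by convert hτ2⟩
  have hCτ : C = cycleEdges τ := by rw [hτC]; rfl
  subst hCτ
  set S := ((edgesAll n).powerset.filter (IsHamCycle n)).filter
    fun H => j ≤ (H ∩ cycleEdges τ).card with hS
  have hD := card_directed_le hτ (by simp; omega) j (n - j - 1) (by simp; omega)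
  rw [Fintype.card_fin] at hD
  -- every Hamiltonian cycle is the edge set of both `σ` and `σ⁻¹`
  have h2 : 2 * S.card ≤ ((Finset.univ : Finset (Equiv.Perm (Fin n))).filter fun σ =>
      FullCycle σ ∧ j ≤ (cycleEdges σ ∩ cycleEdges τ).card).card := by
    refine Finset.mul_card_image_le_card_of_maps_to (f := cycleEdges) ?_ 2 ?_
    · intro σ hσ
      simp only [Finset.mem_filter, Finset.mem_univ, true_and] at hσ
      simp only [hS, Finset.mem_filter, Finset.mem_powerset]
      refine ⟨⟨?_, σ, hσ.1.1, by convert hσ.1.2, rfl⟩, hσ.2⟩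
      intro e he
      obtain ⟨v, -, rfl⟩ := Finset.mem_image.1 he
      simpa [edgesAll] using (hσ.1.apply_ne v).symm
    · intro H hH
      simp only [hS, Finset.mem_filter, Finset.mem_powerset] at hH
      obtain ⟨⟨-, σ, hσ1, hσ2, hσH⟩, hj⟩ := hH
      have hσ : FullCycle σ := ⟨hσ1, by convert hσ2⟩
      have hHσ : H = cycleEdges σ := by rw [hσH]; rfl
      subst hHσ
      refine Finset.one_lt_card.2 ⟨σ, ?_, σ⁻¹, ?_, ?_⟩
      · simpa using ⟨hσ, hj⟩
      · simpa [cycleEdges_inv] using ⟨hσ.inv, hj⟩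
      · intro h
        refine hσ.apply_apply_ne (by simp; omega) (⟨0, by omega⟩ : Fin n) ?_
        rw [← Equiv.Perm.mul_apply, mul_eq_one_iff_eq_inv.2 h, Equiv.Perm.one_apply]
  have h3 : (2 : ℝ) * S.card ≤ (n.choose j : ℝ) * 2 ^ j * ((n - j - 1).factorial : ℝ) := by
    exact_mod_cast h2.trans hD
  have h4 : (S.card : ℝ) ≤ (n.choose j : ℝ) * 2 ^ j * ((n - j - 1).factorial : ℝ) / 2 := by
    linarith
  refine ⟨h4, h4.trans_lt ?_⟩
  have h5 : (n.choose j : ℝ) * j.factorial * (n - j - 1).factorial ≤ n.factorial := by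
    rw [← Nat.choose_mul_factorial_mul_factorial (show j ≤ n by omega)]
    exact_mod_cast Nat.mul_le_mul_left _ (Nat.factorial_le (by omega))
  have h6 : (0 : ℝ) < n.factorial := by exact_mod_cast n.factorial_pos
  have h7 : (0 : ℝ) < j.factorial := by exact_mod_cast j.factorial_pos
  have h8 : (0 : ℝ) < 2 ^ j := by positivity
  rw [lt_div_iff₀ h7]
  nlinarith [mul_le_mul_of_nonneg_right h5 h8.le, mul_pos h6 h8]
end
end

section
/- For every integer n ≥ 1, the number of directed Hamilton cycles on the vertex set ℤ/nℤ that share no arc with the fixed directed cycle i ↦ i+1 — equivalently, the number of cyclic permutations σ of ℤ/nℤ (permutations whose cycle decomposition is a single n-cycle) satisfying σ(i) ≠ i+1 for every i ∈ ℤ/nℤ — equals Σ_{k=0}^{n−1} (−1)^k · C(n,k) · (n−k−1)! + (−1)^n. -/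
open Finset
open scoped Classical

noncomputable section

/-!
The count is an inclusion–exclusion over the set `S` of arcs `i → i + 1` that `σ` is forced to
contain.  The input is `card_agree`: if `c` is a full cycle on a finite set `T` and `S ⊂ T` is a
proper subset, then exactly `(|T| - |S| - 1)!` full cycles on `T` agree with `c` on `S`.
For `S = T` only `c` itself agrees, which produces the separate term `(-1) ^ n`.

Both `card_agree` and the count `(|T| - 1)!` of all full cycles on `T` rest on contracting
an arc: by `cyc_contract`, if `σ a = b ≠ a`, then `σ` is a full cycle on `T` iff
`swap a b * σ`, which bypasses `a`, is a full cycle on `T \ {a}`.  Left multiplication by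
`swap a b` preserves agreement with `c` when `c` is contracted in the same way, so an induction on
`S` removes the forced arcs one at a time.
-/

/-- `σ` is a single cycle through all of `T` and fixes everything outside `T`. Unlike
`Equiv.Perm.IsCycle`, this allows one-point cycles, so it is stable under contraction down to
`|T| = 1`. -/
def Cyc {α : Type*} (T : Finset α) (σ : Equiv.Perm α) : Prop :=
  (∀ x, x ∉ T → σ x = x) ∧ ∀ x ∈ T, ∀ y ∈ T, σ.SameCycle x y

/-- A relation that is an equivalence and contains all pairs `(z, f z)` contains the orbit
relation of `f`. -/
theorem sameCycle_le {α : Type*} {f : Equiv.Perm α} {R : α → α → Prop} (hR : Equivalence R)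
    (h : ∀ z, R z (f z)) {x y : α} (hxy : f.SameCycle x y) : R x y := by
  obtain ⟨k, rfl⟩ := hxy
  induction k with
  | zero => exact hR.refl _
  | succ k ih =>
    rw [add_comm, zpow_add, zpow_one, Equiv.Perm.mul_apply]
    exact hR.trans ih (h _)
  | pred k ih =>
    refine hR.trans ih (hR.symm ?_)
    have := h ((f ^ (-(k : ℤ) - 1)) x)
    rwa [← Equiv.Perm.mul_apply, ← zpow_one_add, add_sub_cancel] at this

theorem sameCycle_equivalence {α : Type*} (f : Equiv.Perm α) : Equivalence f.SameCycle :=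
  ⟨fun x => Equiv.Perm.SameCycle.refl f x, fun h => h.symm, fun hxy hyz => hxy.trans hyz⟩

/-- Contracting the arc `a → b` of `σ` turns full cycles on `T` into full cycles on `T \ {a}`,
and conversely. -/
theorem cyc_contract {α : Type*} {T : Finset α} {σ : Equiv.Perm α} {a b : α}
    (ha : a ∈ T) (hb : b ∈ T) (hab : a ≠ b) (hσ : σ a = b) :
    Cyc T σ ↔ Cyc (T.erase a) (Equiv.swap a b * σ) := by
  have hσ'a : (Equiv.swap a b * σ) a = a := by simp [hσ]
  constructor
  · rintro ⟨h1, h2⟩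
    refine ⟨fun x hx => ?_, fun x hx y hy => ?_⟩
    · by_cases hxa : x = a
      · rw [hxa, hσ'a]
      · have hxT : x ∉ T := fun h => hx (mem_erase.2 ⟨hxa, h⟩)
        rw [Equiv.Perm.mul_apply, h1 x hxT,
          Equiv.swap_apply_of_ne_of_ne hxa (fun h => hxT (h ▸ hb))]
    · -- The retraction `r` sending `a` to `b` carries `σ`-orbits into orbits of the contraction.
      let r : α → α := fun y => if y = a then b else y
      have hE : Equivalence fun u v => (Equiv.swap a b * σ).SameCycle (r u) (r v) :=
        (sameCycle_equivalence _).comap r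
      have key := sameCycle_le hE (f := σ) (fun z => ?_) (h2 x (mem_of_mem_erase hx) y
        (mem_of_mem_erase hy))
      · simpa [r, ne_of_mem_erase hx, ne_of_mem_erase hy] using key
      · by_cases hz : z = a
        · subst hz
          simp [r, hσ, Equiv.Perm.SameCycle.refl]
        · refine ⟨1, ?_⟩
          by_cases hza : σ z = a
          · simp [r, hz, hza]
          · have hzb : σ z ≠ b := fun h => hz (σ.injective (h.trans hσ.symm))
            simp [r, hz, hza, Equiv.swap_apply_of_ne_of_ne hza hzb]
  · rintro ⟨h1, h2⟩
    have hle : ∀ z, σ.SameCycle z ((Equiv.swap a b * σ) z) := by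
      intro z
      by_cases hz : z = a
      · subst hz
        rw [hσ'a]
      · by_cases hza : σ z = a
        · refine ⟨2, ?_⟩
          simp [hza, hσ, pow_two]
        · have hzb : σ z ≠ b := fun h => hz (σ.injective (h.trans hσ.symm))
          refine ⟨1, ?_⟩
          simp [Equiv.swap_apply_of_ne_of_ne hza hzb]
    have hbT : b ∈ T.erase a := mem_erase.2 ⟨hab.symm, hb⟩
    have toB : ∀ x ∈ T, σ.SameCycle x b := by
      intro x hx
      by_cases hxa : x = a
      · exact ⟨1, by simp [hxa, hσ]⟩
      · exact sameCycle_le (sameCycle_equivalence σ) hle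
          (h2 x (mem_erase.2 ⟨hxa, hx⟩) b hbT)
    refine ⟨fun x hx => ?_, fun x hx y hy => (toB x hx).trans (toB y hy).symm⟩
    have hxa : x ≠ a := fun h => hx (h ▸ ha)
    have hxb : x ≠ b := fun h => hx (h ▸ hb)
    have := h1 x (fun h => hx (mem_of_mem_erase h))
    rw [Equiv.Perm.mul_apply, Equiv.swap_apply_eq_iff,
      Equiv.swap_apply_of_ne_of_ne hxa hxb] at this
    exact this

theorem Cyc.apply_mem {α : Type*} {T : Finset α} {σ : Equiv.Perm α} (h : Cyc T σ) {a : α}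
    (ha : a ∈ T) : σ a ∈ T := by
  by_contra hn
  exact hn ((σ.injective (h.1 _ hn)).symm ▸ ha)

theorem Cyc.apply_ne {α : Type*} {T : Finset α} {σ : Equiv.Perm α} (h : Cyc T σ) {a d : α}
    (ha : a ∈ T) (hd : d ∈ T) (hda : d ≠ a) : σ a ≠ a := by
  intro hn
  obtain ⟨k, hk⟩ := h.2 a ha d hd
  rw [Equiv.Perm.zpow_apply_eq_self_of_apply_eq_self hn] at hk
  exact hda hk.symm

/-- Contraction as an equality of counts, for any side condition `P` which is transported to `Q`
by left multiplication with `swap a b`. -/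
theorem card_contract {α : Type*} [Fintype α] {T : Finset α} {a b : α}
    (ha : a ∈ T) (hb : b ∈ T) (hab : a ≠ b) (P Q : Equiv.Perm α → Prop)
    (hPQ : ∀ σ, P σ ↔ Q (Equiv.swap a b * σ)) :
    (univ.filter fun σ : Equiv.Perm α => Cyc T σ ∧ σ a = b ∧ P σ).card =
      (univ.filter fun σ : Equiv.Perm α => Cyc (T.erase a) σ ∧ Q σ).card := by
  refine Finset.card_equiv (Equiv.mulLeft (Equiv.swap a b)) fun σ => ?_
  simp only [mem_filter, mem_univ, true_and, Equiv.coe_mulLeft]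
  constructor
  · rintro ⟨h, hσ, hP⟩
    exact ⟨(cyc_contract ha hb hab hσ).1 h, (hPQ σ).1 hP⟩
  · rintro ⟨h, hQ⟩
    have hσ : σ a = b := by
      have := h.1 a (notMem_erase a T)
      rwa [Equiv.Perm.mul_apply, Equiv.swap_apply_eq_iff, Equiv.swap_apply_left] at this
    exact ⟨(cyc_contract ha hb hab hσ).2 h, hσ, (hPQ σ).2 hQ⟩

theorem card_cyc {α : Type*} [Fintype α] (m : ℕ) (T : Finset α) (hT : T.card = m + 1) :
    (univ.filter fun σ : Equiv.Perm α => Cyc T σ).card = m.factorial := by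
  induction m generalizing T with
  | zero =>
    obtain ⟨a, rfl⟩ := card_eq_one.1 hT
    rw [Nat.factorial_zero, card_eq_one]
    refine ⟨1, ?_⟩
    ext σ
    simp only [mem_filter, mem_univ, true_and, mem_singleton]
    constructor
    · intro h
      ext x
      by_cases hx : x = a
      · subst hx
        simpa using h.apply_mem (mem_singleton_self x)
      · simpa using h.1 x (by simpa using hx)
    · rintro rfl
      refine ⟨fun _ _ => rfl, fun x hx y hy => ?_⟩
      rw [mem_singleton.1 hx, mem_singleton.1 hy]
  | succ m ih =>
    obtain ⟨a, ha⟩ : T.Nonempty := card_pos.1 (by omega)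
    have hc : (T.erase a).card = m + 1 := by rw [card_erase_of_mem ha]; omega
    obtain ⟨d, hd⟩ : (T.erase a).Nonempty := card_pos.1 (by omega)
    -- Split the cycles on `T` according to the image `b` of `a`.
    rw [card_eq_sum_card_fiberwise (f := fun σ : Equiv.Perm α => σ a) (t := T.erase a)]
    · have hfib : ∀ b ∈ T.erase a,
          ((univ.filter fun σ : Equiv.Perm α => Cyc T σ).filter fun σ => σ a = b).card =
            m.factorial := by
        intro b hb
        have := card_contract ha (mem_of_mem_erase hb) (ne_of_mem_erase hb).symm
          (fun _ => True) (fun _ => True) (fun _ => Iff.rfl)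
        simp only [and_true] at this
        rw [filter_filter, this, ih _ hc]
      rw [sum_congr rfl hfib, sum_const, hc, smul_eq_mul, Nat.factorial_succ]
    · intro σ hσ
      have h : Cyc T σ := by simpa using hσ
      exact mem_coe.2 (mem_erase.2 ⟨h.apply_ne ha (mem_of_mem_erase hd) (ne_of_mem_erase hd),
        h.apply_mem ha⟩)

/-- Full cycles on `T` that contain a prescribed proper subset of the arcs of a full cycle `c`. -/
theorem card_agree {α : Type*} [Fintype α] (S T : Finset α) (c : Equiv.Perm α) (hc : Cyc T c)
    (hST : S ⊂ T) :
    (univ.filter fun σ : Equiv.Perm α => Cyc T σ ∧ ∀ i ∈ S, σ i = c i).card =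
      (T.card - S.card - 1).factorial := by
  induction S using Finset.induction_on generalizing T c with
  | empty =>
    have : 0 < T.card := card_pos.2 (by simpa using hST)
    have h := card_cyc (T.card - 1) T (by omega)
    simpa using h
  | insert a S haS ih =>
    have ha : a ∈ T := hST.1 (mem_insert_self a S)
    obtain ⟨d, hd, hdS⟩ := exists_of_ssubset hST
    have hda : d ≠ a := fun h => hdS (h ▸ mem_insert_self a S)
    have hab : a ≠ c a := (hc.apply_ne ha hd hda).symm
    have h := card_contract ha (hc.apply_mem ha) hab (fun σ => ∀ i ∈ S, σ i = c i)
      (fun σ => ∀ i ∈ S, σ i = (Equiv.swap a (c a) * c) i) (fun σ => by simp)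
    have hS' : S ⊂ T.erase a := by
      refine (ssubset_iff_of_subset fun x hx => ?_).2
        ⟨d, mem_erase.2 ⟨hda, hd⟩, fun h => hdS (mem_insert_of_mem h)⟩
      exact mem_erase.2 ⟨fun h => haS (h ▸ hx), hST.1 (mem_insert_of_mem hx)⟩
    have hih := ih _ _ ((cyc_contract ha (hc.apply_mem ha) hab rfl).1 hc) hS'
    have hcard : (T.erase a).card - S.card - 1 = T.card - (insert a S).card - 1 := by
      rw [card_erase_of_mem ha, card_insert_of_notMem haS]
      omega
    rw [hcard] at hih
    simp only [forall_mem_insert]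
    refine Eq.trans ?_ (h.trans (Eq.trans ?_ hih)) <;> congr!

theorem cyc_univ_iff {α : Type*} [Fintype α] [DecidableEq α] [Nontrivial α] (σ : Equiv.Perm α) :
    (σ.IsCycle ∧ σ.support = univ) ↔ Cyc univ σ := by
  constructor
  · rintro ⟨h, hs⟩
    have hne : ∀ x, σ x ≠ x := fun x => Equiv.Perm.mem_support.1 (hs ▸ mem_univ x)
    exact ⟨fun x hx => absurd (mem_univ x) hx, fun x _ y _ => h.sameCycle (hne x) (hne y)⟩
  · intro h
    have hne : ∀ x, σ x ≠ x := fun x => by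
      obtain ⟨d, hd⟩ := exists_ne x
      exact h.apply_ne (mem_univ x) (mem_univ d) hd
    obtain ⟨x⟩ : Nonempty α := inferInstance
    refine ⟨⟨x, hne x, fun y _ => h.2 x (mem_univ x) y (mem_univ y)⟩, ?_⟩
    ext x
    simp [hne x]

theorem cyc_addRight (n : ℕ) [NeZero n] : Cyc univ (Equiv.addRight (1 : ZMod n)) := by
  refine ⟨fun x hx => absurd (mem_univ x) hx, fun x _ y _ => ?_⟩
  have : ∀ x : ZMod n, ∀ k : ℕ, ((Equiv.addRight (1 : ZMod n)) ^ k) x = x + k := by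
    intro x k
    induction k with
    | zero => simp
    | succ k ih =>
      rw [pow_succ', Equiv.Perm.mul_apply, ih]
      simp [add_assoc]
  exact ⟨((y - x).val : ℕ), by rw [zpow_natCast, this]; simp⟩

/-- **Formula for `f'₀(n)` (Wright; Frieze–Suen).**  The number of cyclic permutations `σ`
of `ℤ/nℤ` (permutations whose cycle decomposition is a single `n`-cycle, i.e. directed
Hamilton cycles) with `σ(i) ≠ i+1` for all `i` — i.e. sharing no arc with the directed
cycle `i ↦ i+1` — equals `Σ_{k=0}^{n-1} (-1)^k C(n,k) (n-k-1)! + (-1)^n`. -/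
theorem derangement_like_count (n : ℕ) [NeZero n] :
    ((Finset.univ.filter fun σ : Equiv.Perm (ZMod n) =>
        σ.IsCycle ∧ σ.support = Finset.univ ∧ ∀ i : ZMod n, σ i ≠ i + 1).card : ℤ) =
      (∑ k ∈ Finset.range n, (-1 : ℤ) ^ k * (n.choose k : ℤ) * ((n - k - 1).factorial : ℤ)) +
        (-1 : ℤ) ^ n := by
  -- For `n = 1` the condition `σ i ≠ i + 1` is never satisfied, so the convention that
  -- the identity is not an `IsCycle` does not matter.
  have hset : (Finset.univ.filter fun σ : Equiv.Perm (ZMod n) =>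
      σ.IsCycle ∧ σ.support = Finset.univ ∧ ∀ i : ZMod n, σ i ≠ i + 1) =
      Finset.univ.filter fun σ : Equiv.Perm (ZMod n) =>
        Cyc univ σ ∧ ∀ i : ZMod n, σ i ≠ i + 1 := by
    refine filter_congr fun σ _ => ?_
    rcases subsingleton_or_nontrivial (ZMod n) with h | h
    · have : ¬ ∀ i : ZMod n, σ i ≠ i + 1 := fun hall => hall 0 (Subsingleton.elim _ _)
      simp only [this, and_false]
    · rw [← cyc_univ_iff, and_assoc]
  rw [hset]
  have hIE := inclusion_exclusion_sum_inf_compl (univ : Finset (ZMod n))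
    (fun i => univ.filter fun σ : Equiv.Perm (ZMod n) => σ i = i + 1)
    (fun σ => if Cyc univ σ then (1 : ℤ) else 0)
  have hterm : ∀ t : Finset (ZMod n),
      (∑ σ ∈ t.inf fun i => univ.filter fun σ : Equiv.Perm (ZMod n) => σ i = i + 1,
        if Cyc univ σ then (1 : ℤ) else 0) =
      if t.card = n then 1 else ((n - t.card - 1).factorial : ℤ) := by
    intro t
    have hinf : ((t.inf fun i => univ.filter fun σ : Equiv.Perm (ZMod n) => σ i = i + 1).filter
        fun σ => Cyc univ σ) = univ.filter fun σ : Equiv.Perm (ZMod n) =>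
          Cyc univ σ ∧ ∀ i ∈ t, σ i = Equiv.addRight (1 : ZMod n) i := by
      ext σ
      rw [mem_filter, mem_filter]
      simp [mem_inf, and_comm]
    rw [sum_boole, hinf]
    split_ifs with ht
    · have htu : t = univ := (card_eq_iff_eq_univ t).1 (by rw [ht, ZMod.card])
      rw [Nat.cast_eq_one, card_eq_one]
      refine ⟨Equiv.addRight (1 : ZMod n), ?_⟩
      ext σ
      simp only [htu, mem_filter, mem_univ, true_and, mem_singleton, forall_true_left]
      constructor
      · exact fun h => Equiv.ext h.2
      · rintro rfl
        exact ⟨cyc_addRight n, fun _ => rfl⟩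
    · have htu : t ⊂ univ := ssubset_univ_iff.2 fun h => ht (by rw [h, card_univ, ZMod.card])
      have h := card_agree t univ _ (cyc_addRight n) htu
      rw [card_univ, ZMod.card] at h
      rw [← h]
      congr!
  simp only [hterm] at hIE
  have hL : ((univ.inf fun i => (univ.filter fun σ : Equiv.Perm (ZMod n) => σ i = i + 1)ᶜ).filter
      fun σ => Cyc univ σ) = univ.filter fun σ : Equiv.Perm (ZMod n) =>
        Cyc univ σ ∧ ∀ i : ZMod n, σ i ≠ i + 1 := by
    ext σ
    simp [mem_inf, and_comm]
  rw [sum_boole, hL] at hIE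
  rw [hIE, sum_powerset_apply_card
    (fun m => (-1 : ℤ) ^ m • if m = n then (1 : ℤ) else ((n - m - 1).factorial : ℤ)),
    card_univ, ZMod.card, sum_range_succ]
  congr 1
  · refine sum_congr rfl fun k hk => ?_
    rw [if_neg (mem_range.1 hk).ne]
    simp only [smul_eq_mul, nsmul_eq_mul]
    ring
  · simp
end
end
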